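/- arXiv:1104.4534 — 2 statements merged into one kernel-verified Lean document; each statement's English description precedes it below -/
import Mathlib

section
/- (Convergence Result 1.) Assume H_i(x,p) = F_i(x,p) − f_i(x) with F_i, f_i satisfying (A1)–(A5). Then for any continuous initial data (u₀₁, u₀₂) on 𝕋^n there exists a viscosity solution (v₁, v₂) ∈ C(𝕋^n)² of the ergodic problem (E) with ergodic constant c = 0 such that the viscosity solution (u₁, u₂) of (C) satisfies u_i(·,t) → v_i uniformly on 𝕋^n as t → ∞, for i = 1,2. -/
open MeasureTheory Filter Topology Set

noncomputable section

/-- Euclidean space `ℝ^n`; the torus `𝕋^n` is modelled by `ℤ^n`-periodic functions on it. -/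
abbrev En (n : ℕ) : Type := EuclideanSpace ℝ (Fin n)

/-- The integer vector `k ∈ ℤ^n` viewed as an element of `ℝ^n`. -/
def intVec (n : ℕ) (k : Fin n → ℤ) : En n := WithLp.toLp 2 (fun i => (k i : ℝ))

/-- A `ℤ^n`-periodic function on `ℝ^n`, i.e. a function on the torus `𝕋^n`. -/
def ZPeriodic {n : ℕ} (f : En n → ℝ) : Prop :=
  ∀ (x : En n) (k : Fin n → ℤ), f (x + intVec n k) = f x

/-- A Hamiltonian `H : 𝕋^n × ℝ^n → ℝ` (periodic in the first variable). -/
def ZPeriodicH {n : ℕ} (H : En n → En n → ℝ) : Prop :=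
  ∀ (x : En n) (k : Fin n → ℤ) (p : En n), H (x + intVec n k) p = H x p

/-- A function on `𝕋^n × ℝ` (space-time, periodic in space). -/
def ZPeriodicST {n : ℕ} (u : En n × ℝ → ℝ) : Prop :=
  ∀ (x : En n) (k : Fin n → ℤ) (t : ℝ), u (x + intVec n k, t) = u (x, t)

/-- (A1): coercivity, `lim_{r→∞} inf{H(x,p) : x ∈ 𝕋^n, |p| ≥ r} = ∞`. -/
def Coercive {n : ℕ} (H : En n → En n → ℝ) : Prop :=
  ∀ M : ℝ, ∃ r : ℝ, ∀ (x p : En n), r ≤ ‖p‖ → M ≤ H x p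

/-- Coercivity for an `x`-independent Hamiltonian. -/
def CoerciveP {n : ℕ} (H : En n → ℝ) : Prop :=
  ∀ M : ℝ, ∃ r : ℝ, ∀ p : En n, r ≤ ‖p‖ → M ≤ H p

/-- Lipschitz continuity (membership in `W^{1,∞}`). -/
def IsLip {n : ℕ} (f : En n → ℝ) : Prop := ∃ K : NNReal, LipschitzWith K f

/-- Viscosity subsolution inequality for one stationary equation
`H(x, Dw) + c (w - wo) ≤ ρ(x)` of a weakly coupled system. -/
def StatSubIneq {n : ℕ} (H : En n → En n → ℝ) (c : ℝ) (w wo : En n → ℝ) (ρ : En n → ℝ) : Prop :=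
  ∀ φ : En n → ℝ, ContDiff ℝ 1 φ →
    ∀ x₀ : En n, IsLocalMax (fun x => w x - φ x) x₀ →
      H x₀ (gradient φ x₀) + c * (w x₀ - wo x₀) ≤ ρ x₀

/-- Viscosity supersolution inequality for one stationary equation. -/
def StatSuperIneq {n : ℕ} (H : En n → En n → ℝ) (c : ℝ) (w wo : En n → ℝ) (ρ : En n → ℝ) : Prop :=
  ∀ φ : En n → ℝ, ContDiff ℝ 1 φ →
    ∀ x₀ : En n, IsLocalMin (fun x => w x - φ x) x₀ →
      ρ x₀ ≤ H x₀ (gradient φ x₀) + c * (w x₀ - wo x₀)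

/-- Viscosity subsolution of the stationary system
`Hᵢ(x, Dwᵢ) + cᵢ (wᵢ - wⱼ) = ρᵢ(x)`, `i = 1,2`. -/
def CellSub {n : ℕ} (H₁ H₂ : En n → En n → ℝ) (c₁ c₂ : ℝ) (w₁ w₂ : En n → ℝ)
    (ρ₁ ρ₂ : En n → ℝ) : Prop :=
  StatSubIneq H₁ c₁ w₁ w₂ ρ₁ ∧ StatSubIneq H₂ c₂ w₂ w₁ ρ₂

/-- Viscosity supersolution of the stationary system. -/
def CellSuper {n : ℕ} (H₁ H₂ : En n → En n → ℝ) (c₁ c₂ : ℝ) (w₁ w₂ : En n → ℝ)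
    (ρ₁ ρ₂ : En n → ℝ) : Prop :=
  StatSuperIneq H₁ c₁ w₁ w₂ ρ₁ ∧ StatSuperIneq H₂ c₂ w₂ w₁ ρ₂

/-- Viscosity solution (continuous, sub- and supersolution) of the stationary system. -/
def CellSolution {n : ℕ} (H₁ H₂ : En n → En n → ℝ) (c₁ c₂ : ℝ) (v₁ v₂ : En n → ℝ)
    (ρ₁ ρ₂ : En n → ℝ) : Prop :=
  Continuous v₁ ∧ Continuous v₂ ∧
    CellSub H₁ H₂ c₁ c₂ v₁ v₂ ρ₁ ρ₂ ∧ CellSuper H₁ H₂ c₁ c₂ v₁ v₂ ρ₁ ρ₂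

/-- Subsolution of the ergodic problem (E) with constant `c` (coupling constants 1). -/
def ErgSub {n : ℕ} (H₁ H₂ : En n → En n → ℝ) (v₁ v₂ : En n → ℝ) (c : ℝ) : Prop :=
  CellSub H₁ H₂ 1 1 v₁ v₂ (fun _ => c) (fun _ => c)

/-- Supersolution of the ergodic problem (E). -/
def ErgSuper {n : ℕ} (H₁ H₂ : En n → En n → ℝ) (v₁ v₂ : En n → ℝ) (c : ℝ) : Prop :=
  CellSuper H₁ H₂ 1 1 v₁ v₂ (fun _ => c) (fun _ => c)

/-- Viscosity solution of the ergodic problem (E):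
`H₁(x,Dv₁) + v₁ - v₂ = c`, `H₂(x,Dv₂) + v₂ - v₁ = c` on `𝕋^n`. -/
def ErgSolution {n : ℕ} (H₁ H₂ : En n → En n → ℝ) (v₁ v₂ : En n → ℝ) (c : ℝ) : Prop :=
  CellSolution H₁ H₂ 1 1 v₁ v₂ (fun _ => c) (fun _ => c)

/-- Viscosity subsolution inequality for one evolution equation
`∂ₜ u + H(x, Du) + u - uo ≤ 0` in `𝕋^n × (0,∞)`. -/
def EvolSubIneq {n : ℕ} (H : En n → En n → ℝ) (u uo : En n × ℝ → ℝ) : Prop :=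
  ∀ φ : En n × ℝ → ℝ, ContDiff ℝ 1 φ →
    ∀ (x₀ : En n) (t₀ : ℝ), 0 < t₀ →
      IsLocalMax (fun q => u q - φ q) (x₀, t₀) →
      fderiv ℝ φ (x₀, t₀) (0, 1) + H x₀ (gradient (fun y => φ (y, t₀)) x₀)
        + u (x₀, t₀) - uo (x₀, t₀) ≤ 0

/-- Viscosity supersolution inequality for one evolution equation. -/
def EvolSuperIneq {n : ℕ} (H : En n → En n → ℝ) (u uo : En n × ℝ → ℝ) : Prop :=
  ∀ φ : En n × ℝ → ℝ, ContDiff ℝ 1 φ →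
    ∀ (x₀ : En n) (t₀ : ℝ), 0 < t₀ →
      IsLocalMin (fun q => u q - φ q) (x₀, t₀) →
      0 ≤ fderiv ℝ φ (x₀, t₀) (0, 1) + H x₀ (gradient (fun y => φ (y, t₀)) x₀)
        + u (x₀, t₀) - uo (x₀, t₀)

/-- Viscosity subsolution of system (C) (with coupling constants `c₁ = c₂ = 1`). -/
def SysSub {n : ℕ} (H₁ H₂ : En n → En n → ℝ) (u₁ u₂ : En n × ℝ → ℝ) : Prop :=
  EvolSubIneq H₁ u₁ u₂ ∧ EvolSubIneq H₂ u₂ u₁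

/-- Viscosity supersolution of system (C). -/
def SysSuper {n : ℕ} (H₁ H₂ : En n → En n → ℝ) (u₁ u₂ : En n × ℝ → ℝ) : Prop :=
  EvolSuperIneq H₁ u₁ u₂ ∧ EvolSuperIneq H₂ u₂ u₁

/-- Viscosity solution of the Cauchy problem (C): continuous on `𝕋^n × [0,∞)`,
sub- and supersolution, attaining the initial data. -/
def SysSolution {n : ℕ} (H₁ H₂ : En n → En n → ℝ) (u₀₁ u₀₂ : En n → ℝ)
    (u₁ u₂ : En n × ℝ → ℝ) : Prop :=
  ContinuousOn u₁ {q : En n × ℝ | 0 ≤ q.2} ∧ ContinuousOn u₂ {q : En n × ℝ | 0 ≤ q.2} ∧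
    SysSub H₁ H₂ u₁ u₂ ∧ SysSuper H₁ H₂ u₁ u₂ ∧
    (∀ x, u₁ (x, 0) = u₀₁ x) ∧ (∀ x, u₂ (x, 0) = u₀₂ x)

/-- Viscosity subsolution of the single stationary equation `H(x,Dv) ≤ c` on `𝕋^n`. -/
def SingleSub {n : ℕ} (H : En n → En n → ℝ) (v : En n → ℝ) (c : ℝ) : Prop :=
  ∀ φ : En n → ℝ, ContDiff ℝ 1 φ →
    ∀ x₀ : En n, IsLocalMax (fun x => v x - φ x) x₀ → H x₀ (gradient φ x₀) ≤ c

/-- Viscosity supersolution of the single stationary equation `H(x,Dv) ≥ c` on `𝕋^n`. -/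
def SingleSuper {n : ℕ} (H : En n → En n → ℝ) (v : En n → ℝ) (c : ℝ) : Prop :=
  ∀ φ : En n → ℝ, ContDiff ℝ 1 φ →
    ∀ x₀ : En n, IsLocalMin (fun x => v x - φ x) x₀ → c ≤ H x₀ (gradient φ x₀)

/-- Viscosity solution of the single stationary equation `H(x,Dv) = c` on `𝕋^n`. -/
def SingleSolution {n : ℕ} (H : En n → En n → ℝ) (v : En n → ℝ) (c : ℝ) : Prop :=
  Continuous v ∧ SingleSub H v c ∧ SingleSuper H v c

/-- Uniform convergence `u(·,t) → v` on `𝕋^n` as `t → ∞`. -/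
def UnifTendsTo {n : ℕ} (u : En n × ℝ → ℝ) (v : En n → ℝ) : Prop :=
  ∀ ε : ℝ, 0 < ε → ∃ T : ℝ, ∀ t : ℝ, T ≤ t → ∀ x : En n, |u (x, t) - v x| ≤ ε

/-- (A8)⁺ at level `η` with constant `ψ`. -/
def A8plusAt {n : ℕ} (H : En n → En n → ℝ) (η ψ : ℝ) : Prop :=
  ∀ (x p q : En n), η ≤ H x (p + q) → H x q ≤ 0 →
    ∀ μ : ℝ, 0 < μ → μ ≤ 1 → H x (p + q) + ψ * (1 - μ) ≤ μ * H x (μ⁻¹ • p + q)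

/-- (A8)⁻ at level `η` with constant `ψ`. -/
def A8minusAt {n : ℕ} (H : En n → En n → ℝ) (η ψ : ℝ) : Prop :=
  ∀ (x p q : En n), H x (p + q) ≤ -η → 0 ≤ H x q →
    ∀ μ : ℝ, 1 ≤ μ → μ * H x (μ⁻¹ • p + q) ≤ H x (p + q) - ψ * (μ - 1) / μ

/-- (A8)⁺ with threshold `η₀`. -/
def A8plus {n : ℕ} (H : En n → En n → ℝ) (η₀ : ℝ) : Prop :=
  ∀ η : ℝ, 0 < η → η ≤ η₀ → ∃ ψ : ℝ, 0 < ψ ∧ A8plusAt H η ψ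

/-- (A8)⁻ with threshold `η₀`. -/
def A8minus {n : ℕ} (H : En n → En n → ℝ) (η₀ : ℝ) : Prop :=
  ∀ η : ℝ, 0 < η → η ≤ η₀ → ∃ ψ : ℝ, 0 < ψ ∧ A8minusAt H η ψ

/-- The function `F` of the Key Lemma: `F(r) = C r` for `r ≥ 0`, `F(r) = r / C` for `r < 0`. -/
def Fc (C r : ℝ) : ℝ := if 0 ≤ r then C * r else r / C

/-- `α_η⁺(s)` (resp. `β_η⁺(s)` with `u = u₂`):
`min_{x ∈ 𝕋^n, t ≥ s} (u(x,t) - v(x) + η (t-s)) / (u(x,s) - v(x))`. -/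
def alphaPlus {n : ℕ} (u : En n × ℝ → ℝ) (v : En n → ℝ) (η s : ℝ) : ℝ :=
  sInf {r : ℝ | ∃ (x : En n) (t : ℝ), s ≤ t ∧
    r = (u (x, t) - v x + η * (t - s)) / (u (x, s) - v x)}

/-- `α_η⁻(s)` (resp. `β_η⁻(s)` with `u = u₂`):
`max_{x ∈ 𝕋^n, t ≥ s} (u(x,t) - v(x) - η (t-s)) / (u(x,s) - v(x))`. -/
def alphaMinus {n : ℕ} (u : En n × ℝ → ℝ) (v : En n → ℝ) (η s : ℝ) : ℝ :=
  sSup {r : ℝ | ∃ (x : En n) (t : ℝ), s ≤ t ∧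
    r = (u (x, t) - v x - η * (t - s)) / (u (x, s) - v x)}

/-- (A9)⁺. -/
def A9plus {n : ℕ} (H : En n → En n → ℝ) : Prop :=
  ∃ K : Set (En n), IsClosed K ∧ (∀ x ∈ K, ∀ k : Fin n → ℤ, x + intVec n k ∈ K) ∧
    (∀ x ∈ K, (∀ p : En n, 0 ≤ H x p) ∧ ∃ p : En n, H x p = 0) ∧
    (∀ ε : ℝ, 0 < ε → ∃ η₀ : ℝ, 0 < η₀ ∧ ∃ ψ : ℝ → ℝ, (∀ r : ℝ, 0 < r → 0 < ψ r) ∧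
      ∀ η : ℝ, 0 < η → η ≤ η₀ → ∀ (x p q : En n), ε ≤ Metric.infDist x K →
        η ≤ H x (p + q) → H x q ≤ 0 →
        ∀ μ : ℝ, 0 < μ → μ ≤ 1 → H x (p + q) + ψ η * (1 - μ) ≤ μ * H x (μ⁻¹ • p + q))

/-- (A9)⁻. -/
def A9minus {n : ℕ} (H : En n → En n → ℝ) : Prop :=
  ∃ K : Set (En n), IsClosed K ∧ (∀ x ∈ K, ∀ k : Fin n → ℤ, x + intVec n k ∈ K) ∧
    (∀ x ∈ K, (∀ p : En n, 0 ≤ H x p) ∧ ∃ p : En n, H x p = 0) ∧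
    (∀ ε : ℝ, 0 < ε → ∃ η₀ : ℝ, 0 < η₀ ∧ ∃ ψ : ℝ → ℝ, (∀ r : ℝ, 0 < r → 0 < ψ r) ∧
      ∀ η : ℝ, 0 < η → η ≤ η₀ → ∀ (x p q : En n), ε ≤ Metric.infDist x K →
        H x (p + q) ≤ -η → 0 ≤ H x q →
        ∀ μ : ℝ, 1 ≤ μ → μ * H x (μ⁻¹ • p + q) ≤ H x (p + q) - ψ η * (μ - 1) / μ)

/-- (A6): uniform convexity of an `x`-independent Hamiltonian. -/
def UnifConvex {n : ℕ} (H : En n → ℝ) : Prop :=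
  ∃ α : ℝ, 0 < α ∧ ∀ᵐ q : En n ∂volume, DifferentiableAt ℝ H q ∧
    ∀ p : En n, H q + fderiv ℝ H q (p - q) + α * ‖p - q‖ ^ 2 ≤ H p

end



lemma grad_add {n : ℕ} {f g : En n → ℝ} (hf : ContDiff ℝ 1 f) (hg : ContDiff ℝ 1 g) (x : En n) :
    gradient (fun y => f y + g y) x = gradient f x + gradient g x := by
  apply HasGradientAt.gradient
  rw [hasGradientAt_iff_hasFDerivAt, map_add]
  have h1 := ((hf.differentiable one_ne_zero) x).hasGradientAt.hasFDerivAt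
  have h2 := ((hg.differentiable one_ne_zero) x).hasGradientAt.hasFDerivAt
  exact h1.add h2

lemma grad_smul {n : ℕ} {f : En n → ℝ} (hf : ContDiff ℝ 1 f) (k : ℝ) (x : En n) :
    gradient (fun y => k * f y) x = k • gradient f x := by
  apply HasGradientAt.gradient
  rw [hasGradientAt_iff_hasFDerivAt, map_smul]
  have h1 := ((hf.differentiable one_ne_zero) x).hasGradientAt.hasFDerivAt
  simpa using h1.const_mul k

lemma grad_neg {n : ℕ} {f : En n → ℝ} (hf : ContDiff ℝ 1 f) (x : En n) :
    gradient (fun y => - f y) x = - gradient f x := by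
  have := grad_smul hf (-1) x
  simpa using this

lemma grad_const {n : ℕ} (c : ℝ) (x : En n) :
    gradient (fun _ : En n => c) x = 0 := by
  apply HasGradientAt.gradient
  rw [hasGradientAt_iff_hasFDerivAt, map_zero]
  exact hasFDerivAt_const c x

lemma cd_sq {n : ℕ} (c : En n) : ContDiff ℝ 1 (fun y : En n => ‖y - c‖ ^ 2) :=
  (contDiff_id.sub contDiff_const).norm_sq ℝ

lemma grad_sq {n : ℕ} (c x : En n) :
    gradient (fun y : En n => ‖y - c‖ ^ 2) x = (2 : ℝ) • (x - c) := by
  apply HasGradientAt.gradient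
  rw [hasGradientAt_iff_hasFDerivAt]
  have h := ((hasFDerivAt_id (𝕜 := ℝ) x).sub_const c).norm_sq
  refine h.congr_fderiv ?_
  ext v
  simp [two_mul]

lemma cont_grad {n : ℕ} {f : En n → ℝ} (hf : ContDiff ℝ 1 f) : Continuous (gradient f) := by
  have h : Continuous (fderiv ℝ f) := hf.continuous_fderiv one_ne_zero
  exact (InnerProductSpace.toDual ℝ (En n)).symm.continuous.comp h

lemma deriv_sqsub (c x : ℝ) : HasDerivAt (fun s : ℝ => (s - c) ^ 2) (2 * (x - c)) x := by
  have := ((hasDerivAt_id' x).sub_const c).fun_pow 2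
  refine this.congr_deriv ?_
  push_cast
  ring

/-- penalization -/
lemma penalize {X : Type*} [TopologicalSpace X] [FirstCountableTopology X]
    (N : Set X) (hN : IsCompact N) (g pen : X → ℝ) (hg : Continuous g) (hp : Continuous pen)
    (hp0 : ∀ z, 0 ≤ pen z) (z₀ : X) (hz : z₀ ∈ N) (hz0 : pen z₀ = 0)
    (hstrict : ∀ z ∈ N, pen z = 0 → g z₀ ≤ g z → z = z₀) :
    ∃ z : ℕ → X, (∀ k, z k ∈ N) ∧
      (∀ k : ℕ, ∀ y ∈ N, g y - (k : ℝ) * pen y ≤ g (z k) - (k : ℝ) * pen (z k)) ∧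
      Tendsto z atTop (𝓝 z₀) := by
  have hex : ∀ k : ℕ, ∃ x ∈ N, ∀ y ∈ N, g y - (k : ℝ) * pen y ≤ g x - (k : ℝ) * pen x := by
    intro k
    obtain ⟨x, hx, hmax⟩ := hN.exists_isMaxOn ⟨z₀, hz⟩
      (f := fun y => g y - (k : ℝ) * pen y) (by fun_prop)
    exact ⟨x, hx, fun y hy => hmax hy⟩
  choose z hzN hzmax using hex
  refine ⟨z, hzN, hzmax, ?_⟩
  obtain ⟨G, hG⟩ := (hN.bddAbove_image hg.continuousOn)
  have hGb : ∀ y ∈ N, g y ≤ G := fun y hy => hG ⟨y, hy, rfl⟩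
  refine tendsto_of_subseq_tendsto fun ns hns => ?_
  obtain ⟨a, haN, ms, hms, hlim⟩ := hN.tendsto_subseq (fun k => hzN (ns k))
  refine ⟨ms, ?_⟩
  have hns' : Tendsto (fun k => ((ns (ms k) : ℕ) : ℝ)) atTop atTop :=
    tendsto_natCast_atTop_atTop.comp (hns.comp hms.tendsto_atTop)
  have hg' : Tendsto (fun k => g (z (ns (ms k)))) atTop (𝓝 (g a)) :=
    (hg.tendsto a).comp hlim
  have hp' : Tendsto (fun k => pen (z (ns (ms k)))) atTop (𝓝 (pen a)) :=
    (hp.tendsto a).comp hlim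
  have hbase : ∀ k, g z₀ ≤ g (z k) - (k : ℝ) * pen (z k) := by
    intro k
    have := hzmax k z₀ hz
    simpa [hz0] using this
  have hpa : pen a = 0 := by
    have h1 : ∀ᶠ k in atTop, pen (z (ns (ms k))) ≤ (G - g z₀) * ((ns (ms k) : ℕ) : ℝ)⁻¹ := by
      filter_upwards [hns'.eventually_gt_atTop 0] with k hk
      have := hbase (ns (ms k))
      have h2 := hGb _ (hzN (ns (ms k)))
      rw [← div_eq_mul_inv, le_div_iff₀ hk]
      linarith
    have h2 : Tendsto (fun k => (G - g z₀) * ((ns (ms k) : ℕ) : ℝ)⁻¹) atTop (𝓝 0) := by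
      simpa using (tendsto_inv_atTop_zero.comp hns').const_mul (G - g z₀)
    exact le_antisymm (le_of_tendsto_of_tendsto hp' h2 h1) (hp0 a)
  have hga : g z₀ ≤ g a := by
    refine ge_of_tendsto hg' (Eventually.of_forall fun k => ?_)
    have := hbase (ns (ms k))
    have h3 : 0 ≤ ((ns (ms k) : ℕ) : ℝ) * pen (z (ns (ms k))) :=
      mul_nonneg (Nat.cast_nonneg _) (hp0 _)
    linarith
  have := hstrict a haN hpa hga
  rw [← this]
  exact hlim

/-- one sided separable subsolution tests -/
def SubSep {n : ℕ} (H : En n → En n → ℝ) (u uo : En n × ℝ → ℝ) : Prop :=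
  ∀ (α : En n → ℝ) (β : ℝ → ℝ), ContDiff ℝ 1 α → ContDiff ℝ 1 β →
    ∀ (x₀ : En n) (t₀ : ℝ), 0 < t₀ →
      (∃ r > 0, ∀ y s, ‖y - x₀‖ ≤ r → t₀ - r ≤ s → s ≤ t₀ →
        u (y, s) - α y - β s ≤ u (x₀, t₀) - α x₀ - β t₀) →
      deriv β t₀ + H x₀ (gradient α x₀) + u (x₀, t₀) - uo (x₀, t₀) ≤ 0

lemma sep_of_evol {n : ℕ} {H : En n → En n → ℝ} {u uo : En n × ℝ → ℝ}
    (h : EvolSubIneq H u uo) (α : En n → ℝ) (β : ℝ → ℝ) (hα : ContDiff ℝ 1 α)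
    (hβ : ContDiff ℝ 1 β) (x₀ : En n) (t₀ : ℝ) (ht : 0 < t₀)
    (hm : IsLocalMax (fun q : En n × ℝ => u q - α q.1 - β q.2) (x₀, t₀)) :
    deriv β t₀ + H x₀ (gradient α x₀) + u (x₀, t₀) - uo (x₀, t₀) ≤ 0 := by
  have hφ : ContDiff ℝ 1 (fun q : En n × ℝ => α q.1 + β q.2) :=
    (hα.comp contDiff_fst).add (hβ.comp contDiff_snd)
  have := h _ hφ x₀ t₀ ht (by simpa only [← sub_sub] using hm)
  have e1 : gradient (fun y => α y + β t₀) x₀ = gradient α x₀ := by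
    rw [grad_add hα contDiff_const, grad_const, add_zero]
  have e2 : fderiv ℝ (fun q : En n × ℝ => α q.1 + β q.2) (x₀, t₀) (0, 1) = deriv β t₀ := by
    have h1 : HasFDerivAt (fun q : En n × ℝ => α q.1)
        ((fderiv ℝ α x₀).comp (ContinuousLinearMap.fst ℝ (En n) ℝ)) (x₀, t₀) :=
      HasFDerivAt.comp (x₀, t₀) (hα.differentiable one_ne_zero x₀).hasFDerivAt hasFDerivAt_fst
    have h2 : HasFDerivAt (fun q : En n × ℝ => β q.2)
        ((fderiv ℝ β t₀).comp (ContinuousLinearMap.snd ℝ (En n) ℝ)) (x₀, t₀) :=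
      HasFDerivAt.comp (x₀, t₀) (hβ.differentiable one_ne_zero t₀).hasFDerivAt hasFDerivAt_snd
    rw [(h1.fun_add h2).fderiv]
    simp
  simp only [e1, e2] at this
  exact this

lemma subSep_of_evol {n : ℕ} {H : En n → En n → ℝ} {u uo : En n × ℝ → ℝ}
    (hH : Continuous fun q : En n × En n => H q.1 q.2) (hu : Continuous u) (huo : Continuous uo)
    (h : EvolSubIneq H u uo) : SubSep H u uo := by
  rintro α β hα hβ x₀ t₀ ht ⟨r₀, hr₀, hmax₀⟩
  obtain ⟨r, hr, hrt, hmax⟩ : ∃ r > 0, r < t₀ ∧ ∀ y s, ‖y - x₀‖ ≤ r → t₀ - r ≤ s → s ≤ t₀ →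
        u (y, s) - α y - β s ≤ u (x₀, t₀) - α x₀ - β t₀ := by
    refine ⟨min r₀ (t₀ / 2), by positivity, (min_le_right _ _).trans_lt (by linarith), ?_⟩
    intro y s h1 h2 h3
    exact hmax₀ y s (h1.trans (min_le_left _ _)) (by linarith [min_le_left r₀ (t₀/2)]) h3
  have hαc := hα.continuous
  have hβc := hβ.continuous
  have hec : ContDiff ℝ 1 expNegInvGlue := expNegInvGlue.contDiff
  have hecc := hec.continuous
  obtain ⟨z, hzN, hzmax, hzlim⟩ := penalize (X := En n × ℝ)
    (Metric.closedBall x₀ r ×ˢ Icc (t₀ - r) (t₀ + r))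
    ((isCompact_closedBall x₀ r).prod isCompact_Icc)
    (fun q => u q - (α q.1 + ‖q.1 - x₀‖ ^ 2) - (β q.2 + (q.2 - t₀) ^ 2))
    (fun q => expNegInvGlue (q.2 - t₀)) (by fun_prop) (by fun_prop)
    (fun q => expNegInvGlue.nonneg _) (x₀, t₀) (by simp [hr.le])
    (expNegInvGlue.zero_of_nonpos (by simp)) (by
      rintro ⟨y, s⟩ ⟨hy, hs⟩ hpen hge
      simp only [Metric.mem_closedBall, dist_eq_norm, mem_Icc] at hy hs
      have hst : s ≤ t₀ := by
        by_contra hc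
        have := expNegInvGlue.pos_of_pos (x := s - t₀) (by linarith)
        simp only at hpen
        linarith
      have h1 := hmax y s hy hs.1 hst
      simp only [sub_self, norm_zero] at hge
      have h2 : ‖y - x₀‖ ^ 2 = 0 := by nlinarith [sq_nonneg ‖y - x₀‖, sq_nonneg (s - t₀)]
      have h3 : (s - t₀) ^ 2 = 0 := by nlinarith [sq_nonneg ‖y - x₀‖, sq_nonneg (s - t₀)]
      have h2' : y - x₀ = 0 := by simpa using h2
      have h3' : s - t₀ = 0 := by simpa using h3
      rw [sub_eq_zero] at h2' h3'
      rw [h2', h3'])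
  have hz1 : Tendsto (fun k => (z k).1) atTop (𝓝 x₀) := (continuous_fst.tendsto (x₀, t₀)).comp hzlim
  have hz2 : Tendsto (fun k => (z k).2) atTop (𝓝 t₀) := (continuous_snd.tendsto (x₀, t₀)).comp hzlim
  have key : ∀ᶠ k in atTop, deriv β (z k).2 + 2 * ((z k).2 - t₀)
      + H (z k).1 (gradient α (z k).1 + (2:ℝ) • ((z k).1 - x₀)) + u (z k) - uo (z k) ≤ 0 := by
    have hmem : ∀ᶠ k in atTop, z k ∈ Metric.ball x₀ r ×ˢ Ioo (t₀ - r) (t₀ + r) :=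
      hzlim.eventually ((Metric.isOpen_ball.prod isOpen_Ioo).mem_nhds (by simp [hr]))
    filter_upwards [hmem] with k hk
    have hα' : ContDiff ℝ 1 (fun y : En n => α y + ‖y - x₀‖ ^ 2) := hα.add (cd_sq x₀)
    have hβ2 : ContDiff ℝ 1 (fun s : ℝ => (s - t₀) ^ 2) := by fun_prop
    have hβ3 : ContDiff ℝ 1 (fun s : ℝ => (k : ℝ) * expNegInvGlue (s - t₀)) :=
      contDiff_const.mul (hec.comp (by fun_prop))
    have hβ' : ContDiff ℝ 1 (fun s : ℝ => β s + (s - t₀) ^ 2 + (k : ℝ) * expNegInvGlue (s - t₀)) :=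
      (hβ.add hβ2).add hβ3
    have := sep_of_evol h _ _ hα' hβ' (z k).1 (z k).2 (by have := hk.2.1; linarith) (by
      have hnb : Metric.ball x₀ r ×ˢ Ioo (t₀ - r) (t₀ + r) ∈ 𝓝 (z k) :=
        (Metric.isOpen_ball.prod isOpen_Ioo).mem_nhds hk
      filter_upwards [hnb] with q hq
      have := hzmax k q ⟨Metric.ball_subset_closedBall hq.1, Ioo_subset_Icc_self hq.2⟩
      linarith)
    rw [grad_add hα (cd_sq x₀), grad_sq] at this
    have e : deriv (fun s : ℝ => β s + (s - t₀) ^ 2 + (k : ℝ) * expNegInvGlue (s - t₀)) (z k).2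
        ≥ deriv β (z k).2 + 2 * ((z k).2 - t₀) := by
      have d1 := (hβ.differentiable one_ne_zero (z k).2).hasDerivAt
      have d2 : HasDerivAt (fun s : ℝ => (s - t₀) ^ 2) (2 * ((z k).2 - t₀)) (z k).2 := by
        exact deriv_sqsub t₀ (z k).2
      have d3 := (hβ3.differentiable one_ne_zero (z k).2).hasDerivAt
      rw [((d1.fun_add d2).fun_add d3).deriv]
      have : 0 ≤ deriv (fun s : ℝ => (k : ℝ) * expNegInvGlue (s - t₀)) (z k).2 := by
        apply Monotone.deriv_nonneg
        intro a b hab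
        exact mul_le_mul_of_nonneg_left (expNegInvGlue.monotone (by linarith)) (Nat.cast_nonneg _)
      linarith
    linarith
  have hcd : Continuous (deriv β) := hβ.continuous_deriv le_rfl
  have hcg := cont_grad hα
  have hcont : Continuous (fun q : En n × ℝ => deriv β q.2 + 2 * (q.2 - t₀)
      + H q.1 (gradient α q.1 + (2:ℝ) • (q.1 - x₀)) + u q - uo q) := by
    have : Continuous (fun q : En n × ℝ => H q.1 (gradient α q.1 + (2:ℝ) • (q.1 - x₀))) :=
      hH.comp (by fun_prop : Continuous fun q : En n × ℝ => (q.1, gradient α q.1 + (2:ℝ) • (q.1 - x₀)))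
    fun_prop
  have := le_of_tendsto ((hcont.tendsto (x₀, t₀)).comp hzlim) key
  simpa using this


lemma pointP {n : ℕ} {H : En n → En n → ℝ} {u uo : En n × ℝ → ℝ} {f : En n → ℝ}
    (hu : Continuous u) (huo : Continuous uo) (hf : Continuous f) (h : SubSep H u uo)
    (hH : ∀ y p, - f y ≤ H y p) (x : En n) (β : ℝ → ℝ) (hβ : ContDiff ℝ 1 β)
    (a t₀ : ℝ) (ha : 0 ≤ a) (hat : a < t₀)
    (hmax : ∀ s, a ≤ s → s ≤ t₀ → u (x, s) - β s ≤ u (x, t₀) - β t₀) :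
    deriv β t₀ + u (x, t₀) - uo (x, t₀) ≤ f x := by
  have hβc := hβ.continuous
  obtain ⟨z, hzN, hzmax, hzlim⟩ := penalize (X := En n × ℝ)
    (Metric.closedBall x 1 ×ˢ Icc a t₀)
    ((isCompact_closedBall x 1).prod isCompact_Icc)
    (fun q => u q - (β q.2 + (q.2 - t₀) ^ 2))
    (fun q => ‖q.1 - x‖ ^ 2) (by fun_prop) (by fun_prop)
    (fun q => sq_nonneg _) (x, t₀) (by simp [hat.le]) (by simp) (by
      rintro ⟨y, s⟩ ⟨hy, hs⟩ hpen hge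
      have hyx : y = x := by simpa [sub_eq_zero] using hpen
      subst hyx
      have h1 := hmax s hs.1 hs.2
      simp only [sub_self] at hge
      have h3 : (s - t₀) ^ 2 = 0 := by nlinarith [sq_nonneg (s - t₀)]
      have h3' : s - t₀ = 0 := by simpa using h3
      rw [sub_eq_zero] at h3'
      rw [h3'])
  have hβ' : ContDiff ℝ 1 (fun s : ℝ => β s + (s - t₀) ^ 2) := hβ.add (by fun_prop)
  have key : ∀ᶠ k in atTop, deriv β (z k).2 + 2 * ((z k).2 - t₀)
      - f (z k).1 + u (z k) - uo (z k) ≤ 0 := by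
    have hmem : ∀ᶠ k in atTop, z k ∈ Metric.ball x 1 ×ˢ Ioi a :=
      hzlim.eventually ((Metric.isOpen_ball.prod isOpen_Ioi).mem_nhds (by simp [hat]))
    filter_upwards [hmem] with k hk
    have hα' : ContDiff ℝ 1 (fun y : En n => (k : ℝ) * ‖y - x‖ ^ 2) := contDiff_const.mul (cd_sq x)
    have hkd : dist (z k).1 x < 1 := hk.1
    have hka : a < (z k).2 := hk.2
    have := h _ _ hα' hβ' (z k).1 (z k).2 (by linarith) (by
      refine ⟨min (1 - dist (z k).1 x) ((z k).2 - a), lt_min (by linarith) (by linarith), ?_⟩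
      intro y s hy hs1 hs2
      have hm1 := min_le_left (1 - dist (z k).1 x) ((z k).2 - a)
      have hm2 := min_le_right (1 - dist (z k).1 x) ((z k).2 - a)
      have hyd : dist y x ≤ 1 := by
        have := dist_triangle y (z k).1 x
        rw [← dist_eq_norm] at hy
        linarith
      have := hzmax k (y, s) ⟨hyd, by linarith, hs2.trans (hzN k).2.2⟩
      simp only at this
      linarith)
    have e : deriv (fun s : ℝ => β s + (s - t₀) ^ 2) (z k).2
        = deriv β (z k).2 + 2 * ((z k).2 - t₀) := by
      have d1 := (hβ.differentiable one_ne_zero (z k).2).hasDerivAt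
      rw [(d1.fun_add (deriv_sqsub t₀ (z k).2)).deriv]
    rw [e] at this
    have := hH (z k).1 (gradient (fun y : En n => (k : ℝ) * ‖y - x‖ ^ 2) (z k).1)
    linarith
  have hcd : Continuous (deriv β) := hβ.continuous_deriv le_rfl
  have hcont : Continuous (fun q : En n × ℝ => deriv β q.2 + 2 * (q.2 - t₀)
      - f q.1 + u q - uo q) := by fun_prop
  have := le_of_tendsto ((hcont.tendsto (x, t₀)).comp hzlim) key
  simp at this
  linarith

lemma cell (n : ℕ) : ∃ K : Set (En n), IsCompact K ∧ ∀ x : En n, ∃ k : Fin n → ℤ,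
    x + intVec n k ∈ K := by
  refine ⟨(fun v : Fin n → ℝ => (WithLp.toLp 2 v : En n)) '' (Set.pi univ fun _ => Icc 0 1),
    (isCompact_univ_pi fun _ => isCompact_Icc).image (PiLp.continuous_toLp 2 _), fun x => ?_⟩
  refine ⟨fun i => - ⌊x i⌋, fun i => x i - ⌊x i⌋, ?_, ?_⟩
  · intro i _
    exact ⟨sub_nonneg.2 (Int.floor_le _), by linarith [Int.lt_floor_add_one (x i)]⟩
  · ext i
    simp [intVec, sub_eq_add_neg]

lemma maxPer {n : ℕ} (g : En n × ℝ → ℝ) (hg : Continuous g) (hp : ZPeriodicST g) (a b : ℝ)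
    (hab : a ≤ b) : ∃ (x₀ : En n) (t₀ : ℝ), t₀ ∈ Icc a b ∧
      ∀ y, ∀ s ∈ Icc a b, g (y, s) ≤ g (x₀, t₀) := by
  obtain ⟨K, hK, hcell⟩ := cell n
  obtain ⟨k0, hk0⟩ := hcell 0
  obtain ⟨⟨x₀, t₀⟩, hx, hmax⟩ := (hK.prod (isCompact_Icc (a := a) (b := b))).exists_isMaxOn
    ⟨(_, a), hk0, le_rfl, hab⟩ hg.continuousOn
  refine ⟨x₀, t₀, hx.2, fun y s hs => ?_⟩
  obtain ⟨k, hk⟩ := hcell y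
  rw [← hp y k s]
  exact hmax (show (y + intVec n k, s) ∈ K ×ˢ Icc a b from ⟨hk, hs⟩)

lemma bddPer {n : ℕ} (g : En n → ℝ) (hg : Continuous g) (hp : ZPeriodic g) :
    ∃ M, ∀ x, g x ≤ M := by
  obtain ⟨x₀, t₀, _, h⟩ := maxPer (fun q : En n × ℝ => g q.1) (by fun_prop)
    (fun x k t => hp x k) 0 0 le_rfl
  exact ⟨g x₀, fun x => h x 0 ⟨le_rfl, le_rfl⟩⟩

lemma maxPer_max {n : ℕ} {u₁ u₂ : En n × ℝ → ℝ} (h₁ : ZPeriodicST u₁) (h₂ : ZPeriodicST u₂) :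
    ZPeriodicST (fun q => max (u₁ q) (u₂ q)) := by
  intro x k t
  simp only [h₁ x k t, h₂ x k t]

lemma deriv_lin (κ c t : ℝ) : deriv (fun s : ℝ => κ * (s - c)) t = κ := by
  have := ((hasDerivAt_id' t).sub_const c).const_mul κ
  rw [this.deriv, mul_one]

/-- sup bound for subsolutions when `H(x,0) ≥ 0` -/
lemma supBound {n : ℕ} {H₁ H₂ : En n → En n → ℝ} {u₁ u₂ : En n × ℝ → ℝ}
    (hu₁ : Continuous u₁) (hu₂ : Continuous u₂) (hp₁ : ZPeriodicST u₁) (hp₂ : ZPeriodicST u₂)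
    (h₁ : SubSep H₁ u₁ u₂) (h₂ : SubSep H₂ u₂ u₁)
    (hH : ∀ x, 0 ≤ H₁ x 0 ∧ 0 ≤ H₂ x 0) (M : ℝ) (hM : ∀ x, u₁ (x, 0) ≤ M ∧ u₂ (x, 0) ≤ M) :
    ∀ x t, 0 ≤ t → u₁ (x, t) ≤ M ∧ u₂ (x, t) ≤ M := by
  have aux : ∀ κ > 0, ∀ T, 0 ≤ T → ∀ x, max (u₁ (x, T)) (u₂ (x, T)) ≤ M + κ * T := by
    intro κ hκ T hT x
    have hW : ZPeriodicST (fun q : En n × ℝ => max (u₁ q) (u₂ q) - κ * (q.2 - 0)) := by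
      intro x k t
      have := maxPer_max hp₁ hp₂ x k t
      simp only at this ⊢
      rw [this]
    obtain ⟨x₀, t₀, ht, hmax⟩ := maxPer _ (by fun_prop) hW 0 T hT
    simp only at hmax
    have ht0 : t₀ = 0 := by
      by_contra hne
      have ht0 : 0 < t₀ := lt_of_le_of_ne ht.1 (Ne.symm hne)
      have gen : ∀ (H : En n → En n → ℝ) (v vo : En n × ℝ → ℝ), SubSep H v vo → 0 ≤ H x₀ 0 →
          (∀ q, v q ≤ max (u₁ q) (u₂ q)) → v (x₀, t₀) = max (u₁ (x₀, t₀)) (u₂ (x₀, t₀)) →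
          vo (x₀, t₀) ≤ v (x₀, t₀) → False := by
        intro H v vo hs hH0 hle heq hvo
        have := hs (fun _ => 0) (fun s => κ * (s - 0)) contDiff_const (by fun_prop) x₀ t₀ ht0
          ⟨t₀, ht0, fun y s _ hs1 hs2 => by
            have h1 := hmax y s ⟨by linarith, hs2.trans ht.2⟩
            have h2 := hle (y, s)
            linarith⟩
        rw [deriv_lin, grad_const] at this
        linarith
      rcases le_total (u₁ (x₀, t₀)) (u₂ (x₀, t₀)) with hc | hc
      · exact gen H₂ u₂ u₁ h₂ (hH x₀).2 (fun q => le_max_right _ _) (max_eq_right hc).symm hc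
      · exact gen H₁ u₁ u₂ h₁ (hH x₀).1 (fun q => le_max_left _ _) (max_eq_left hc).symm hc
    have h1 := hmax x T ⟨hT, le_rfl⟩
    rw [ht0] at h1
    have h2 := max_le (hM x₀).1 (hM x₀).2
    linarith
  intro x t ht
  have : max (u₁ (x, t)) (u₂ (x, t)) ≤ M := by
    refine le_of_forall_pos_le_add fun ε hε => ?_
    have h1 := aux (ε / (t + 1)) (by positivity) t ht x
    have h2 : ε / (t + 1) * t ≤ ε := by
      rw [div_mul_eq_mul_div, div_le_iff₀ (by positivity)]
      nlinarith
    linarith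
  exact ⟨(le_max_left _ _).trans this, (le_max_right _ _).trans this⟩

/-- monotonicity of the max at a common zero -/
lemma maxMono {n : ℕ} {H₁ H₂ : En n → En n → ℝ} {u₁ u₂ : En n × ℝ → ℝ} {f₁ f₂ : En n → ℝ}
    (hu₁ : Continuous u₁) (hu₂ : Continuous u₂) (hf₁ : Continuous f₁) (hf₂ : Continuous f₂)
    (h₁ : SubSep H₁ u₁ u₂) (h₂ : SubSep H₂ u₂ u₁)
    (hH₁ : ∀ y p, - f₁ y ≤ H₁ y p) (hH₂ : ∀ y p, - f₂ y ≤ H₂ y p)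
    (z : En n) (hz₁ : f₁ z = 0) (hz₂ : f₂ z = 0) (a b : ℝ) (ha : 0 ≤ a) (hab : a ≤ b) :
    max (u₁ (z, b)) (u₂ (z, b)) ≤ max (u₁ (z, a)) (u₂ (z, a)) := by
  have aux : ∀ κ > 0, max (u₁ (z, b)) (u₂ (z, b)) ≤ max (u₁ (z, a)) (u₂ (z, a)) + κ * (b - a) := by
    intro κ hκ
    obtain ⟨t₀, ht, hmax⟩ := (isCompact_Icc (a := a) (b := b)).exists_isMaxOn ⟨a, le_rfl, hab⟩
      (f := fun s => max (u₁ (z, s)) (u₂ (z, s)) - κ * (s - a)) (by fun_prop)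
    have hmax' : ∀ s ∈ Icc a b, max (u₁ (z, s)) (u₂ (z, s)) - κ * (s - a) ≤
      max (u₁ (z, t₀)) (u₂ (z, t₀)) - κ * (t₀ - a) := fun s hs => hmax hs
    have ht0 : t₀ = a := by
      by_contra hne
      have ht0 : a < t₀ := lt_of_le_of_ne ht.1 (Ne.symm hne)
      have gen : ∀ (H : En n → En n → ℝ) (v vo : En n × ℝ → ℝ) (f : En n → ℝ),
          Continuous v → Continuous vo → Continuous f → SubSep H v vo →
          (∀ y p, - f y ≤ H y p) → f z = 0 →
          (∀ q, v q ≤ max (u₁ q) (u₂ q)) → v (z, t₀) = max (u₁ (z, t₀)) (u₂ (z, t₀)) →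
          vo (z, t₀) ≤ v (z, t₀) → False := by
        intro H v vo f hv hvo hf hs hH hfz hle heq hvo'
        have := pointP hv hvo hf hs hH z (fun s => κ * (s - a)) (by fun_prop) a t₀ ha ht0
          (fun s hs1 hs2 => by
            have h1 := hmax' s ⟨hs1, hs2.trans ht.2⟩
            have h2 := hle (z, s)
            linarith)
        rw [deriv_lin] at this
        linarith
      rcases le_total (u₁ (z, t₀)) (u₂ (z, t₀)) with hc | hc
      · exact gen H₂ u₂ u₁ f₂ hu₂ hu₁ hf₂ h₂ hH₂ hz₂ (fun q => le_max_right _ _)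
          (max_eq_right hc).symm hc
      · exact gen H₁ u₁ u₂ f₁ hu₁ hu₂ hf₁ h₁ hH₁ hz₁ (fun q => le_max_left _ _)
          (max_eq_left hc).symm hc
    have h1 := hmax' b ⟨hab, le_rfl⟩
    rw [ht0] at h1
    linarith
  refine le_of_forall_pos_le_add fun ε hε => ?_
  have hd : 0 ≤ b - a := by linarith
  have h1 := aux (ε / (b - a + 1)) (by positivity)
  have h2 : ε / (b - a + 1) * (b - a) ≤ ε := by
    rw [div_mul_eq_mul_div, div_le_iff₀ (by positivity)]
    nlinarith
  linarith

/-- growth in time -/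
lemma timeGrowth {n : ℕ} {H : En n → En n → ℝ} {u uo : En n × ℝ → ℝ} {f : En n → ℝ}
    (hu : Continuous u) (huo : Continuous uo) (hf : Continuous f) (h : SubSep H u uo)
    (hH : ∀ y p, - f y ≤ H y p) (x : En n) (C : ℝ)
    (hC : ∀ t, 0 ≤ t → f x + uo (x, t) - u (x, t) < C) (a b : ℝ) (ha : 0 ≤ a) (hab : a ≤ b) :
    u (x, b) ≤ u (x, a) + C * (b - a) := by
  obtain ⟨t₀, ht, hmax⟩ := (isCompact_Icc (a := a) (b := b)).exists_isMaxOn ⟨a, le_rfl, hab⟩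
    (f := fun s => u (x, s) - C * (s - a)) (by fun_prop)
  have hmax' : ∀ s ∈ Icc a b, u (x, s) - C * (s - a) ≤ u (x, t₀) - C * (t₀ - a) :=
    fun s hs => hmax hs
  have ht0 : t₀ = a := by
    by_contra hne
    have ht0 : a < t₀ := lt_of_le_of_ne ht.1 (Ne.symm hne)
    have := pointP hu huo hf h hH x (fun s => C * (s - a)) (by fun_prop) a t₀ ha ht0
          (fun s hs1 hs2 => hmax' s ⟨hs1, hs2.trans ht.2⟩)
    rw [deriv_lin] at this
    have := hC t₀ (by linarith)
    linarith
  have h1 := hmax' b ⟨hab, le_rfl⟩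
  rw [ht0] at h1
  linarith

/-- relaxation at a common zero -/
lemma relaxODE {n : ℕ} {H : En n → En n → ℝ} {u uo : En n × ℝ → ℝ} {f : En n → ℝ}
    (hu : Continuous u) (huo : Continuous uo) (hf : Continuous f) (h : SubSep H u uo)
    (hH : ∀ y p, - f y ≤ H y p) (z : En n) (hz : f z = 0) (M a b : ℝ) (ha : 0 ≤ a) (hab : a ≤ b)
    (hM : ∀ s ∈ Icc a b, uo (z, s) ≤ M) :
    u (z, b) ≤ M - (M - u (z, a)) * Real.exp (-(b - a)) := by
  set β : ℝ → ℝ := fun s => M - (M - u (z, a)) * Real.exp (-(s - a)) with hβd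
  have hβ : ContDiff ℝ 1 β := by
    have : ContDiff ℝ 1 (fun s : ℝ => Real.exp (-(s - a))) := by fun_prop
    exact contDiff_const.sub (contDiff_const.mul this)
  have hβc := hβ.continuous
  have hβ' : ∀ t, deriv β t = M - β t := by
    intro t
    have h1 : HasDerivAt (fun s : ℝ => Real.exp (-(s - a))) (Real.exp (-(t - a)) * (-1)) t :=
      (((hasDerivAt_id' t).sub_const a).fun_neg).exp
    have h2 := (h1.const_mul (M - u (z, a))).const_sub M
    rw [h2.deriv, hβd]
    ring
  obtain ⟨t₀, ht, hmax⟩ := (isCompact_Icc (a := a) (b := b)).exists_isMaxOn ⟨a, le_rfl, hab⟩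
    (f := fun s => u (z, s) - β s) (by fun_prop)
  have hmax' : ∀ s ∈ Icc a b, u (z, s) - β s ≤ u (z, t₀) - β t₀ := fun s hs => hmax hs
  have hle : u (z, t₀) ≤ β t₀ := by
    rcases eq_or_lt_of_le ht.1 with hta | hta
    · rw [← hta]
      simp [hβd]
    · have := pointP hu huo hf h hH z β hβ a t₀ ha hta
          (fun s hs1 hs2 => hmax' s ⟨hs1, hs2.trans ht.2⟩)
      rw [hβ'] at this
      have := hM t₀ ht
      linarith
  have := hmax' b ⟨hab, le_rfl⟩
  change u (z, b) ≤ β b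
  linarith


lemma cd_cone {n : ℕ} (x : En n) (R ρ : ℝ) (hρ : 0 < ρ) :
    ContDiff ℝ 1 (fun y : En n => 2 * R * Real.sqrt (‖y - x‖ ^ 2 + ρ ^ 2)) := by
  have h : ContDiff ℝ 1 (fun y : En n => ‖y - x‖ ^ 2 + ρ ^ 2) := (cd_sq x).add contDiff_const
  exact contDiff_const.mul (h.sqrt fun y => by positivity)

lemma grad_cone {n : ℕ} (x y : En n) (R ρ : ℝ) (hR : 0 < R) (hρ : 0 < ρ) (hy : ρ ≤ ‖y - x‖) :
    R ≤ ‖gradient (fun y : En n => 2 * R * Real.sqrt (‖y - x‖ ^ 2 + ρ ^ 2)) y‖ := by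
  have hpos : 0 < ‖y - x‖ ^ 2 + ρ ^ 2 := by positivity
  have hg : gradient (fun y : En n => 2 * R * Real.sqrt (‖y - x‖ ^ 2 + ρ ^ 2)) y
      = (2 * R * (1 / (2 * Real.sqrt (‖y - x‖ ^ 2 + ρ ^ 2)))) • ((2 : ℝ) • (y - x)) := by
    apply HasGradientAt.gradient
    rw [hasGradientAt_iff_hasFDerivAt]
    have h0 := ((cd_sq x).differentiable one_ne_zero y).hasGradientAt.hasFDerivAt
    rw [grad_sq] at h0
    have h1 := ((h0.add_const (ρ ^ 2)).sqrt hpos.ne').const_mul (2 * R)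
    refine h1.congr_fderiv ?_
    simp only [map_smul, smul_smul, mul_assoc]
  rw [hg, norm_smul, norm_smul, Real.norm_eq_abs, Real.norm_eq_abs, abs_of_pos (by positivity),
    abs_of_pos (by norm_num)]
  have hs : Real.sqrt (‖y - x‖ ^ 2 + ρ ^ 2) ≤ 2 * ‖y - x‖ := by
    rw [Real.sqrt_le_left (by positivity)]
    nlinarith
  have hs0 : 0 < Real.sqrt (‖y - x‖ ^ 2 + ρ ^ 2) := Real.sqrt_pos.2 hpos
  have : 2 * R * (1 / (2 * Real.sqrt (‖y - x‖ ^ 2 + ρ ^ 2))) * (2 * ‖y - x‖)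
      = R * (2 * ‖y - x‖) / Real.sqrt (‖y - x‖ ^ 2 + ρ ^ 2) := by
    field_simp
  rw [this, le_div_iff₀ hs0]
  exact mul_le_mul_of_nonneg_left hs hR.le

lemma cone {n : ℕ} {H₁ H₂ : En n → En n → ℝ} {u₁ u₂ o₁ o₂ : En n × ℝ → ℝ}
    (hu₁ : Continuous u₁) (hu₂ : Continuous u₂) (hp₁ : ZPeriodicST u₁) (hp₂ : ZPeriodicST u₂)
    (h₁ : SubSep H₁ u₁ o₁) (h₂ : SubSep H₂ u₂ o₂) (x : En n)
    (a b A R m : ℝ) (ha : 0 ≤ a) (hab : a ≤ b) (hA : 0 ≤ A) (hR : 0 < R)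
    (hx : ∀ s ∈ Icc a b, u₁ (x, s) ≤ m ∧ u₂ (x, s) ≤ m)
    (hi : ∀ y, u₁ (y, a) ≤ m + A * (b - a) ∧ u₂ (y, a) ≤ m + A * (b - a))
    (hc₁ : ∀ y s p, s ∈ Icc a b → R ≤ ‖p‖ → u₂ (y, s) ≤ u₁ (y, s) →
      A < H₁ y p + u₁ (y, s) - o₁ (y, s))
    (hc₂ : ∀ y s p, s ∈ Icc a b → R ≤ ‖p‖ → u₁ (y, s) ≤ u₂ (y, s) →
      A < H₂ y p + u₂ (y, s) - o₂ (y, s)) (y : En n) :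
    u₁ (y, b) ≤ m + 2 * R * ‖y - x‖ ∧ u₂ (y, b) ≤ m + 2 * R * ‖y - x‖ := by
  set W : En n × ℝ → ℝ := fun q => max (u₁ q) (u₂ q) with hW
  have hWc : Continuous W := by fun_prop
  have hWp : ZPeriodicST W := maxPer_max hp₁ hp₂
  suffices hS : ∀ ε > 0, W (y, b) ≤ m + ε + 2 * R * (‖y - x‖ + ε) by
    have : W (y, b) ≤ m + 2 * R * ‖y - x‖ := by
      refine le_of_forall_pos_le_add fun δ hδ => ?_
      have := hS (δ / (1 + 2 * R)) (by positivity)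
      have e : δ / (1 + 2 * R) + 2 * R * (δ / (1 + 2 * R)) = δ := by field_simp
      linarith
    exact ⟨(le_max_left _ _).trans this, (le_max_right _ _).trans this⟩
  intro ε hε
  obtain ⟨ρ, hρ, hρε, hnear⟩ : ∃ ρ > 0, ρ ≤ ε ∧ ∀ y s, ‖y - x‖ ≤ ρ → s ∈ Icc a b →
      W (y, s) ≤ m + ε := by
    have hopen : IsOpen {q : En n × ℝ | W q < m + ε} := isOpen_lt hWc continuous_const
    obtain ⟨U, V, hU, _, hxU, hV, hUV⟩ := generalized_tube_lemma (isCompact_singleton (x := x))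
      (isCompact_Icc (a := a) (b := b)) hopen (by
        rintro ⟨x', s⟩ ⟨hx', hs⟩
        rw [mem_singleton_iff] at hx'
        simp only at hx' hs
        subst hx'
        have := max_le (hx s hs).1 (hx s hs).2
        simp only [mem_setOf_eq, hW]
        linarith)
    obtain ⟨r, hr, hrU⟩ := Metric.isOpen_iff.1 hU x (hxU rfl)
    refine ⟨min (r / 2) ε, by positivity, min_le_right _ _, fun y s hy hs => ?_⟩
    have hyU : y ∈ U := hrU (by
      rw [Metric.mem_ball, dist_eq_norm]
      linarith [min_le_left (r / 2) ε])
    have : W (y, s) < m + ε := hUV (show (y, s) ∈ U ×ˢ V from ⟨hyU, hV hs⟩)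
    exact this.le
  set α : En n → ℝ := fun y => 2 * R * Real.sqrt (‖y - x‖ ^ 2 + ρ ^ 2) with hα
  have hαC : ContDiff ℝ 1 α := cd_cone x R ρ hρ
  have hαc := hαC.continuous
  have hαlow : ∀ y, 2 * R * ‖y - x‖ ≤ α y := by
    intro y
    refine mul_le_mul_of_nonneg_left (Real.le_sqrt_of_sq_le (by nlinarith)) (by positivity)
  have hαup : ∀ y, α y ≤ 2 * R * (‖y - x‖ + ρ) := by
    intro y
    refine mul_le_mul_of_nonneg_left (Real.sqrt_le_iff.2 ⟨by positivity, ?_⟩) (by positivity)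
    nlinarith [norm_nonneg (y - x)]
  set g : En n × ℝ → ℝ := fun q => W q - α q.1 - (-A) * (q.2 - b) with hg
  have hgc : Continuous g := by fun_prop
  obtain ⟨xM, tM, htM, hM⟩ := maxPer W hWc hWp a b hab
  set D := W (xM, tM) with hD
  obtain ⟨⟨y₀, t₀⟩, hyt, hmax⟩ := ((isCompact_closedBall x
      (|D - g (x, b)| / R)).prod (isCompact_Icc (a := a) (b := b))).exists_isMaxOn
      ⟨(x, b), by simp; positivity, hab, le_rfl⟩ hgc.continuousOn
  have hmaxall : ∀ y, ∀ s ∈ Icc a b, g (y, s) ≤ g (y₀, t₀) := by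
    intro y s hs
    by_cases hy : y ∈ Metric.closedBall x (|D - g (x, b)| / R)
    · exact hmax (show (y, s) ∈ _ ×ˢ Icc a b from ⟨hy, hs⟩)
    · have hb : g (x, b) ≤ g (y₀, t₀) := hmax (show (x, b) ∈ _ ×ˢ Icc a b from
        ⟨Metric.mem_closedBall_self (by positivity), hab, le_rfl⟩)
      rw [Metric.mem_closedBall, dist_eq_norm, not_le, div_lt_iff₀ hR] at hy
      have h1 := hM y s hs
      have h2 := hαlow y
      have h3 := le_abs_self (D - g (x, b))
      have h4 : 0 ≤ A * (b - s) := mul_nonneg hA (by linarith [hs.2])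
      have h5 : 0 ≤ R * ‖y - x‖ := by positivity
      have h6 : g (y, s) = W (y, s) - α y - A * (b - s) := by simp only [hg]; ring
      nlinarith
  have hfin : g (y₀, t₀) ≤ m + ε := by
    have h4 : 0 ≤ A * (b - t₀) := mul_nonneg hA (by linarith [hyt.2.2])
    have h6 : g (y₀, t₀) = W (y₀, t₀) - α y₀ - A * (b - t₀) := by simp only [hg]; ring
    have h7 : 0 ≤ α y₀ := le_trans (by positivity) (hαlow y₀)
    by_cases hnr : ‖y₀ - x‖ ≤ ρ
    · have := hnear y₀ t₀ hnr hyt.2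
      linarith
    rcases eq_or_lt_of_le hyt.2.1 with hta | hta
    · simp only at hta
      have := max_le (hi y₀).1 (hi y₀).2
      rw [hta] at this
      have h8 : W (y₀, t₀) ≤ m + A * (b - t₀) := this
      linarith
    exfalso
    simp only at hta
    have gen : ∀ (H : En n → En n → ℝ) (v vo : En n × ℝ → ℝ), SubSep H v vo →
          (∀ q, v q ≤ W q) → v (y₀, t₀) = W (y₀, t₀) →
          (∀ p, R ≤ ‖p‖ → A < H y₀ p + v (y₀, t₀) - vo (y₀, t₀)) → False := by
      intro H v vo hs hle heq hcc
      have h8 := hs α (fun s => (-A) * (s - b)) hαC (by fun_prop) y₀ t₀ (by linarith)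
          ⟨t₀ - a, by linarith, fun y s _ hs1 hs2 => by
            have h1 := hmaxall y s ⟨by linarith, hs2.trans hyt.2.2⟩
            have h2 := hle (y, s)
            simp only [hg] at h1
            linarith⟩
      rw [deriv_lin] at h8
      have := hcc _ (grad_cone x y₀ R ρ hR hρ (not_le.1 hnr).le)
      linarith
    rcases le_total (u₁ (y₀, t₀)) (u₂ (y₀, t₀)) with hc | hc
    · exact gen H₂ u₂ o₂ h₂ (fun q => le_max_right _ _) (max_eq_right hc).symm
        (fun p hp => hc₂ _ _ p hyt.2 hp hc)
    · exact gen H₁ u₁ o₁ h₁ (fun q => le_max_left _ _) (max_eq_left hc).symm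
        (fun p hp => hc₁ _ _ p hyt.2 hp hc)
  have h1 := hmaxall y b ⟨hab, le_rfl⟩
  have h2 := hαup y
  have h3 : g (y, b) = W (y, b) - α y := by simp [hg]
  have h4 : 2 * R * (‖y - x‖ + ρ) ≤ 2 * R * (‖y - x‖ + ε) := by gcongr
  linarith

/-- stability -/
lemma stab {n : ℕ} {H : En n → En n → ℝ} {u uo : En n × ℝ → ℝ} {V Vo : En n → ℝ}
    (hH : Continuous fun q : En n × En n => H q.1 q.2)
    (hu : Continuous u) (hVo : Continuous Vo) (h : SubSep H u uo)
    (hup : ∀ ε > 0, ∃ T, ∀ t, T ≤ t → ∀ x, u (x, t) ≤ V x + ε)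
    (hupo : ∀ ε > 0, ∃ T, ∀ t, T ≤ t → ∀ x, uo (x, t) ≤ Vo x + ε)
    (hrec : ∀ x, ∀ ε > 0, ∀ T, ∃ t, T ≤ t ∧ V x - ε ≤ u (x, t)) :
    StatSubIneq H 1 V Vo (fun _ => 0) := by
  intro φ hφ x₀ hloc
  obtain ⟨r, hr, hball⟩ := Metric.nhds_basis_closedBall.eventually_iff.1 hloc
  have hφc := hφ.continuous
  have step : ∀ η : ℝ, 0 < η → η < 1 / 4 → η < r ^ 2 / 4 → ∃ (y : En n) (σ : ℝ),
      ‖y - x₀‖ ^ 2 + σ ^ 2 ≤ 2 * η ∧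
      2 * σ + H y (gradient φ y + (2 : ℝ) • (y - x₀)) + V x₀ - η - φ x₀ + φ y - Vo y - η ≤ 0 := by
    intro η hη hη1 hηr
    obtain ⟨T1, hT1⟩ := hup η hη
    obtain ⟨T2, hT2⟩ := hupo η hη
    obtain ⟨τ, hτ, hVτ⟩ := hrec x₀ η hη (max (max T1 T2) 0 + 2)
    have hτ1 : T1 + 2 ≤ τ := by linarith [le_max_left T1 T2, le_max_left (max T1 T2) 0]
    have hτ2 : T2 + 2 ≤ τ := by linarith [le_max_right T1 T2, le_max_left (max T1 T2) 0]
    have hτ0 : 2 ≤ τ := by linarith [le_max_right (max T1 T2) 0]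
    have hαC : ContDiff ℝ 1 (fun y : En n => φ y + ‖y - x₀‖ ^ 2) := hφ.add (cd_sq x₀)
    obtain ⟨⟨y, s⟩, hys, hmax⟩ := ((isCompact_closedBall x₀ r).prod
      (isCompact_Icc (a := τ - 1) (b := τ + 1))).exists_isMaxOn
      ⟨(x₀, τ), by simp [hr.le]⟩
      (f := fun q : En n × ℝ => u q - (φ q.1 + ‖q.1 - x₀‖ ^ 2) - (q.2 - τ) ^ 2) (by fun_prop)
    have hmax' : ∀ y' s', ‖y' - x₀‖ ≤ r → s' ∈ Icc (τ - 1) (τ + 1) →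
        u (y', s') - (φ y' + ‖y' - x₀‖ ^ 2) - (s' - τ) ^ 2 ≤
        u (y, s) - (φ y + ‖y - x₀‖ ^ 2) - (s - τ) ^ 2 := fun y' s' hy' hs' =>
      hmax (show (y', s') ∈ Metric.closedBall x₀ r ×ˢ Icc (τ - 1) (τ + 1) from
        ⟨by rwa [Metric.mem_closedBall, dist_eq_norm], hs'⟩)
    have hyr : ‖y - x₀‖ ≤ r := by
      have := hys.1; rwa [Metric.mem_closedBall, dist_eq_norm] at this
    have hs1 : τ - 1 ≤ s := hys.2.1
    have h0 := hmax' x₀ τ (by simpa using hr.le) ⟨by linarith, by linarith⟩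
    simp only [sub_self, norm_zero] at h0
    have hVy : V y - φ y ≤ V x₀ - φ x₀ := hball hys.1
    have hu1 := hT1 s (by linarith) y
    have hu2 := hT2 s (by linarith) y
    have hsmall : ‖y - x₀‖ ^ 2 + (s - τ) ^ 2 ≤ 2 * η := by nlinarith
    have hyr' : ‖y - x₀‖ < r := by
      apply lt_of_pow_lt_pow_left₀ 2 hr.le
      nlinarith [sq_nonneg (s - τ)]
    have hsτ : |s - τ| < 1 := by
      rw [← sq_lt_one_iff_abs_lt_one]
      nlinarith [sq_nonneg ‖y - x₀‖]
    rw [abs_lt] at hsτ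
    refine ⟨y, s - τ, hsmall, ?_⟩
    have := h _ (fun s => (s - τ) ^ 2) hαC (by fun_prop) y s (by linarith)
      ⟨min (r - ‖y - x₀‖) (s - (τ - 1)), lt_min (by linarith) (by linarith),
        fun y' s' hy' hs1' hs2' => by
          have m1 := min_le_left (r - ‖y - x₀‖) (s - (τ - 1))
          have m2 := min_le_right (r - ‖y - x₀‖) (s - (τ - 1))
          have htri : ‖y' - x₀‖ ≤ ‖y' - y‖ + ‖y - x₀‖ := by
            simpa using norm_add_le (y' - y) (y - x₀)
          exact hmax' y' s' (by linarith) ⟨by linarith, by linarith⟩⟩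
    rw [(deriv_sqsub τ s).deriv, grad_add hφ (cd_sq x₀), grad_sq] at this
    nlinarith [sq_nonneg ‖y - x₀‖, sq_nonneg (s - τ)]
  set η₀ := min (1 / 8) (r ^ 2 / 8) with hη₀
  have hη₀pos : 0 < η₀ := by positivity
  have hηlim : Tendsto (fun k : ℕ => η₀ * (1 / ((k : ℝ) + 1))) atTop (𝓝 0) := by
    simpa using tendsto_one_div_add_atTop_nhds_zero_nat.const_mul η₀
  have hk : ∀ k : ℕ, 0 < η₀ * (1 / ((k : ℝ) + 1)) ∧ η₀ * (1 / ((k : ℝ) + 1)) ≤ η₀ := by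
    intro k
    refine ⟨by positivity, ?_⟩
    have : 1 / ((k : ℝ) + 1) ≤ 1 := by
      rw [div_le_one (by positivity)]
      linarith [Nat.cast_nonneg (α := ℝ) k]
    nlinarith
  have m1 : η₀ ≤ 1 / 8 := min_le_left _ _
  have m2 : η₀ ≤ r ^ 2 / 8 := min_le_right _ _
  have hr2 : 0 < r ^ 2 := by positivity
  choose y σ hsm hin using fun k : ℕ => step (η₀ * (1 / ((k : ℝ) + 1))) (hk k).1
    (by linarith [(hk k).2]) (by linarith [(hk k).2])
  have hlim2 : Tendsto (fun k : ℕ => 2 * (η₀ * (1 / ((k : ℝ) + 1)))) atTop (𝓝 0) := by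
    simpa using hηlim.const_mul 2
  have hσ : Tendsto σ atTop (𝓝 0) := by
    have h1 : Tendsto (fun k => σ k ^ 2) atTop (𝓝 0) :=
      squeeze_zero (fun k => sq_nonneg _)
        (fun k => by have := hsm k; have := sq_nonneg ‖y k - x₀‖; linarith) hlim2
    have h2 := h1.sqrt
    simp only [Real.sqrt_sq_eq_abs, Real.sqrt_zero] at h2
    exact (tendsto_zero_iff_abs_tendsto_zero _).2 h2
  have hy : Tendsto y atTop (𝓝 x₀) := by
    have h1 : Tendsto (fun k => ‖y k - x₀‖ ^ 2) atTop (𝓝 0) :=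
      squeeze_zero (fun k => sq_nonneg _)
        (fun k => by have := hsm k; have := sq_nonneg (σ k); linarith) hlim2
    have h2 := h1.sqrt
    simp only [Real.sqrt_sq_eq_abs, Real.sqrt_zero, abs_norm] at h2
    exact tendsto_iff_norm_sub_tendsto_zero.2 h2
  have hcg := cont_grad hφ
  have hcont : Continuous (fun q : En n × ℝ × ℝ => 2 * q.2.1 +
      H q.1 (gradient φ q.1 + (2 : ℝ) • (q.1 - x₀)) + V x₀ - q.2.2 - φ x₀ + φ q.1 - Vo q.1 - q.2.2) := by
    have : Continuous (fun q : En n × ℝ × ℝ => H q.1 (gradient φ q.1 + (2:ℝ) • (q.1 - x₀))) :=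
      hH.comp (by fun_prop :
        Continuous fun q : En n × ℝ × ℝ => (q.1, gradient φ q.1 + (2:ℝ) • (q.1 - x₀)))
    fun_prop
  have hT := (hcont.tendsto (x₀, 0, 0)).comp (hy.prodMk_nhds (hσ.prodMk_nhds hηlim))
  have := le_of_tendsto hT (Eventually.of_forall hin)
  simp at this
  linarith


lemma evol_neg {n : ℕ} {H : En n → En n → ℝ} {u uo : En n × ℝ → ℝ}
    (h : EvolSuperIneq H u uo) :
    EvolSubIneq (fun x p => - H x (-p)) (fun q => - u q) (fun q => - uo q) := by
  intro φ hφ x₀ t₀ ht hm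
  have h1 := h (fun q => - φ q) hφ.neg x₀ t₀ ht (by
    have := hm.neg
    refine this.congr (Eventually.of_forall fun q => ?_)
    simp only [Pi.neg_apply]
    ring)
  have hs : ContDiff ℝ 1 (fun y : En n => φ (y, t₀)) :=
    hφ.comp (contDiff_id.prodMk contDiff_const)
  rw [grad_neg hs] at h1
  have e : fderiv ℝ (fun q => - φ q) (x₀, t₀) = - fderiv ℝ φ (x₀, t₀) := fderiv_fun_neg
  rw [e] at h1
  simp only [ContinuousLinearMap.neg_apply] at h1
  linarith

lemma stat_neg {n : ℕ} {H : En n → En n → ℝ} {V Vo : En n → ℝ}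
    (h : StatSubIneq (fun x p => - H x (-p)) 1 (fun x => - V x) (fun x => - Vo x) (fun _ => 0)) :
    StatSuperIneq H 1 V Vo (fun _ => 0) := by
  intro φ hφ x₀ hm
  have h1 := h (fun q => - φ q) hφ.neg x₀ (by
    have := hm.neg
    refine this.congr (Eventually.of_forall fun q => ?_)
    simp only [Pi.neg_apply]
    ring)
  rw [grad_neg hφ] at h1
  simp only [neg_neg] at h1
  linarith

lemma ext_cont {n : ℕ} {u : En n × ℝ → ℝ} (hu : ContinuousOn u {q : En n × ℝ | 0 ≤ q.2}) :
    Continuous (fun q : En n × ℝ => u (q.1, max q.2 0)) :=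
  hu.comp_continuous (by fun_prop) (fun q => by simp)

lemma ext_loc {n : ℕ} (u : En n × ℝ → ℝ) (x₀ : En n) (t₀ : ℝ) (ht : 0 < t₀) :
    (fun q : En n × ℝ => u (q.1, max q.2 0)) =ᶠ[𝓝 (x₀, t₀)] u := by
  have : ∀ᶠ q : En n × ℝ in 𝓝 (x₀, t₀), 0 < q.2 :=
    continuous_snd.continuousAt.eventually (lt_mem_nhds ht)
  filter_upwards [this] with q hq
  rw [max_eq_left hq.le]

lemma ext_sub {n : ℕ} {H : En n → En n → ℝ} {u uo : En n × ℝ → ℝ} (h : EvolSubIneq H u uo) :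
    EvolSubIneq H (fun q => u (q.1, max q.2 0)) (fun q => uo (q.1, max q.2 0)) := by
  intro φ hφ x₀ t₀ ht hm
  have := h φ hφ x₀ t₀ ht (hm.congr (by
    filter_upwards [ext_loc u x₀ t₀ ht] with q hq
    rw [hq]))
  simpa only [max_eq_left ht.le] using this

lemma ext_super {n : ℕ} {H : En n → En n → ℝ} {u uo : En n × ℝ → ℝ} (h : EvolSuperIneq H u uo) :
    EvolSuperIneq H (fun q => u (q.1, max q.2 0)) (fun q => uo (q.1, max q.2 0)) := by
  intro φ hφ x₀ t₀ ht hm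
  have := h φ hφ x₀ t₀ ht (hm.congr (by
    filter_upwards [ext_loc u x₀ t₀ ht] with q hq
    rw [hq]))
  simpa only [max_eq_left ht.le] using this

/-- upper limit -/
lemma limsup_ex (g : ℝ → ℝ) (B : ℝ) (hB : ∀ t, 0 ≤ t → |g t| ≤ B) :
    ∃ L, (∀ ε > 0, ∃ T, ∀ t, T ≤ t → g t ≤ L + ε) ∧ (∀ ε > 0, ∀ T, ∃ t, T ≤ t ∧ L - ε ≤ g t) := by
  set S : Set ℝ := {l | ∃ T, ∀ t, T ≤ t → g t ≤ l} with hS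
  have hne : S.Nonempty := ⟨B, 0, fun t ht => (le_abs_self _).trans (hB t ht)⟩
  have hbd : BddBelow S := ⟨-B, by
    rintro l ⟨T, hT⟩
    have h1 := hT (max T 0) (le_max_left _ _)
    have h2 := neg_le_of_abs_le (hB (max T 0) (le_max_right _ _))
    linarith⟩
  refine ⟨sInf S, fun ε hε => ?_, fun ε hε T => ?_⟩
  · obtain ⟨l, ⟨T, hT⟩, hl⟩ := Real.lt_sInf_add_pos hne hε
    exact ⟨T, fun t ht => (hT t ht).trans hl.le⟩
  · by_contra hc
    push Not at hc
    have : sInf S ≤ sInf S - ε := csInf_le hbd ⟨T, fun t ht => (hc t ht).le⟩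
    linarith

/-- compactness for periodic statements -/
lemma unif_per {n : ℕ} (P : En n → ℝ → Prop)
    (hP : ∀ x k t, P (x + intVec n k) t → P x t)
    (h : ∀ x, ∃ T, ∀ᶠ y in 𝓝 x, ∀ t, T ≤ t → P y t) : ∃ T, ∀ t, T ≤ t → ∀ x, P x t := by
  obtain ⟨K, hK, hcell⟩ := cell n
  have : ∃ T, ∀ y ∈ K, ∀ t, T ≤ t → P y t := by
    refine hK.induction_on (p := fun s => ∃ T, ∀ y ∈ s, ∀ t, T ≤ t → P y t) ⟨0, by simp⟩ ?_ ?_ ?_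
    · rintro s t hst ⟨T, hT⟩
      exact ⟨T, fun y hy => hT y (hst hy)⟩
    · rintro s t ⟨T, hT⟩ ⟨T', hT'⟩
      refine ⟨max T T', fun y hy τ hτ => ?_⟩
      rcases hy with hy | hy
      · exact hT y hy τ ((le_max_left _ _).trans hτ)
      · exact hT' y hy τ ((le_max_right _ _).trans hτ)
    · intro x _
      obtain ⟨T, hT⟩ := h x
      exact ⟨_, mem_nhdsWithin_of_mem_nhds hT, T, fun y hy => hy⟩
  obtain ⟨T, hT⟩ := this
  refine ⟨T, fun t ht x => ?_⟩
  obtain ⟨k, hk⟩ := hcell x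
  exact hP x k t (hT _ hk t ht)

/-- doubling of variables -/
lemma doubling {n : ℕ} {a b ra rb : En n → ℝ} {Ha Hb : En n → En n → ℝ} (L : ℝ) (hL : 0 ≤ L)
    (hLip : ∀ x y, a x - a y ≤ L * ‖x - y‖) (ha : Continuous a) (hb : Continuous b)
    (hra : Continuous ra) (hrb : Continuous rb)
    (hHa : Continuous fun q : En n × En n => Ha q.1 q.2)
    (hHb : Continuous fun q : En n × En n => Hb q.1 q.2)
    (hsub : ∀ φ : En n → ℝ, ContDiff ℝ 1 φ → ∀ x₀, IsLocalMax (fun x => a x - φ x) x₀ →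
      Ha x₀ (gradient φ x₀) ≤ ra x₀)
    (hsup : ∀ φ : En n → ℝ, ContDiff ℝ 1 φ → ∀ x₀, IsLocalMin (fun x => b x - φ x) x₀ →
      rb x₀ ≤ Hb x₀ (gradient φ x₀))
    (xh : En n) (hmax : ∀ x, a x - b x ≤ a xh - b xh) :
    ∃ p, Ha xh p ≤ ra xh ∧ rb xh ≤ Hb xh p := by
  obtain ⟨z, hzN, hzmax, hzlim⟩ := penalize (X := En n × En n)
    (Metric.closedBall xh 1 ×ˢ Metric.closedBall xh 1)
    ((isCompact_closedBall xh 1).prod (isCompact_closedBall xh 1))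
    (fun q => a q.1 - b q.2 - ‖q.1 - xh‖ ^ 2) (fun q => ‖q.1 - q.2‖ ^ 2)
    (by fun_prop) (by fun_prop) (fun q => sq_nonneg _) (xh, xh) (by simp) (by simp) (by
      rintro ⟨x, y⟩ _ hpen hge
      have hxy : x = y := by simpa [sub_eq_zero] using hpen
      subst hxy
      simp only [sub_self, norm_zero] at hge
      have h1 := hmax x
      have h2 : ‖x - xh‖ ^ 2 ≤ 0 := by linarith
      have h3 : ‖x - xh‖ = 0 := by nlinarith [norm_nonneg (x - xh)]
      have : x = xh := by simpa [sub_eq_zero] using h3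
      rw [this])
  set X : ℕ → En n := fun k => (z k).1 with hX
  set Y : ℕ → En n := fun k => (z k).2 with hY
  have hXlim : Tendsto X atTop (𝓝 xh) := (continuous_fst.tendsto _).comp hzlim
  have hYlim : Tendsto Y atTop (𝓝 xh) := (continuous_snd.tendsto _).comp hzlim
  have hbig : ∀ k : ℕ, ∀ x y, x ∈ Metric.closedBall xh 1 → y ∈ Metric.closedBall xh 1 →
      a x - b y - ‖x - xh‖ ^ 2 - k * ‖x - y‖ ^ 2 ≤
      a (X k) - b (Y k) - ‖X k - xh‖ ^ 2 - k * ‖X k - Y k‖ ^ 2 := fun k x y hx hy =>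
    hzmax k (x, y) ⟨hx, hy⟩
  have hXm : ∀ k, X k ∈ Metric.closedBall xh 1 := fun k => (hzN k).1
  have hYm : ∀ k, Y k ∈ Metric.closedBall xh 1 := fun k => (hzN k).2
  have hbound : ∀ k : ℕ, k * ‖X k - Y k‖ ≤ L + 2 := by
    intro k
    rcases (norm_nonneg (X k - Y k)).eq_or_lt with h0 | h0
    · rw [← h0]; linarith
    have h1 := hbig k (Y k) (Y k) (hYm k) (hYm k)
    simp only [sub_self, norm_zero] at h1
    have h2 := hLip (X k) (Y k)
    have h3 : ‖Y k - xh‖ ≤ ‖X k - xh‖ + ‖X k - Y k‖ := by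
      have := norm_sub_le (X k - xh) (X k - Y k)
      simpa using this
    have hx1 : ‖X k - xh‖ ≤ 1 := by have := hXm k; rwa [Metric.mem_closedBall, dist_eq_norm] at this
    have hy1 : ‖Y k - xh‖ ≤ 1 := by have := hYm k; rwa [Metric.mem_closedBall, dist_eq_norm] at this
    have h4 : ‖Y k - xh‖ ^ 2 - ‖X k - xh‖ ^ 2 ≤ 2 * ‖X k - Y k‖ := by
      nlinarith [norm_nonneg (X k - xh), norm_nonneg (Y k - xh)]
    have h5 : (k * ‖X k - Y k‖) * ‖X k - Y k‖ ≤ (L + 2) * ‖X k - Y k‖ := by nlinarith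
    exact le_of_mul_le_mul_right h5 h0
  set p : ℕ → En n := fun k => (k : ℝ) • ((2 : ℝ) • (X k - Y k)) with hp
  have hpb : ∀ k, p k ∈ Metric.closedBall (0 : En n) (2 * (L + 2)) := by
    intro k
    rw [mem_closedBall_zero_iff, hp]
    simp only [norm_smul, Real.norm_eq_abs, Nat.abs_cast, Nat.abs_ofNat]
    linarith [hbound k]
  obtain ⟨P, _, ms, hms, hPlim⟩ := (isCompact_closedBall (0 : En n) (2 * (L + 2))).tendsto_subseq hpb
  have hXs := hXlim.comp hms.tendsto_atTop
  have hYs := hYlim.comp hms.tendsto_atTop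
  have hballX : ∀ᶠ k in atTop, Metric.closedBall xh 1 ∈ 𝓝 (X k) := by
    filter_upwards [hXlim.eventually (Metric.ball_mem_nhds xh one_pos)] with k hk
    exact mem_of_superset (Metric.isOpen_ball.mem_nhds hk) Metric.ball_subset_closedBall
  have hballY : ∀ᶠ k in atTop, Metric.closedBall xh 1 ∈ 𝓝 (Y k) := by
    filter_upwards [hYlim.eventually (Metric.ball_mem_nhds xh one_pos)] with k hk
    exact mem_of_superset (Metric.isOpen_ball.mem_nhds hk) Metric.ball_subset_closedBall
  refine ⟨P, ?_, ?_⟩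
  · have hev : ∀ᶠ k in atTop, Ha (X k) ((2 : ℝ) • (X k - xh) + p k) ≤ ra (X k) := by
      filter_upwards [hballX] with k hk
      have hc : ContDiff ℝ 1 (fun x : En n => (k : ℝ) * ‖x - Y k‖ ^ 2) :=
        contDiff_const.mul (cd_sq (Y k))
      have := hsub (fun x => ‖x - xh‖ ^ 2 + k * ‖x - Y k‖ ^ 2) ((cd_sq xh).add hc) (X k) (by
        filter_upwards [hk] with x hx
        have := hbig k x (Y k) hx (hYm k)
        linarith)
      rw [grad_add (cd_sq xh) hc, grad_smul (cd_sq (Y k)), grad_sq, grad_sq] at this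
      exact this
    have hl : Tendsto (fun k => Ha (X (ms k)) ((2 : ℝ) • (X (ms k) - xh) + p (ms k))) atTop
        (𝓝 (Ha xh P)) := by
      have h1 : Tendsto (fun k => (2 : ℝ) • (X (ms k) - xh) + p (ms k)) atTop (𝓝 P) := by
        have := ((hXs.sub_const xh).const_smul (2 : ℝ)).add hPlim
        simpa using this
      exact (hHa.tendsto (xh, P)).comp (hXs.prodMk_nhds h1)
    exact le_of_tendsto_of_tendsto hl ((hra.tendsto xh).comp hXs)
      (hms.tendsto_atTop.eventually hev)
  · have hev : ∀ᶠ k in atTop, rb (Y k) ≤ Hb (Y k) (p k) := by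
      filter_upwards [hballY] with k hk
      have := hsup (fun y => (-(k : ℝ)) * ‖y - X k‖ ^ 2)
        (contDiff_const.mul (cd_sq (X k))) (Y k) (by
        filter_upwards [hk] with y hy
        have := hbig k (X k) y (hXm k) hy
        rw [norm_sub_rev (X k) y, norm_sub_rev (X k) (Y k)] at this
        linarith)
      rw [grad_smul (cd_sq (X k)), grad_sq] at this
      have e : (-(k : ℝ)) • ((2 : ℝ) • (Y k - X k)) = p k := by
        simp only [hp]
        rw [← neg_sub (X k) (Y k), smul_neg, smul_neg, neg_smul, neg_neg]
      rwa [e] at this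
    have hl : Tendsto (fun k => Hb (Y (ms k)) (p (ms k))) atTop (𝓝 (Hb xh P)) :=
      (hHb.tendsto (xh, P)).comp (hYs.prodMk_nhds hPlim)
    exact le_of_tendsto_of_tendsto ((hrb.tendsto xh).comp hYs) hl
      (hms.tendsto_atTop.eventually hev)

/-- convergence at common zeros -/
lemma conv_zero {n : ℕ} {H₁ H₂ : En n → En n → ℝ} {u₁ u₂ : En n × ℝ → ℝ} {f₁ f₂ : En n → ℝ}
    (hu₁ : Continuous u₁) (hu₂ : Continuous u₂) (hf₁ : Continuous f₁) (hf₂ : Continuous f₂)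
    (h₁ : SubSep H₁ u₁ u₂) (h₂ : SubSep H₂ u₂ u₁)
    (hH₁ : ∀ y p, - f₁ y ≤ H₁ y p) (hH₂ : ∀ y p, - f₂ y ≤ H₂ y p)
    (z : En n) (hz₁ : f₁ z = 0) (hz₂ : f₂ z = 0) (B : ℝ)
    (hB : ∀ t, 0 ≤ t → |u₁ (z, t)| ≤ B) :
    ∃ m, ∀ δ > 0, ∃ T, ∀ t, T ≤ t → (m - δ ≤ u₁ (z, t) ∧ u₁ (z, t) ≤ m + δ) ∧
      (m - δ ≤ u₂ (z, t) ∧ u₂ (z, t) ≤ m + δ) := by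
  set w : ℝ → ℝ := fun t => max (u₁ (z, t)) (u₂ (z, t)) with hw
  have hmono : ∀ a b, 0 ≤ a → a ≤ b → w b ≤ w a := fun a b ha hab =>
    maxMono hu₁ hu₂ hf₁ hf₂ h₁ h₂ hH₁ hH₂ z hz₁ hz₂ a b ha hab
  set S : Set ℝ := w '' Ici 0 with hS
  have hbd : BddBelow S := ⟨-B, by
    rintro _ ⟨t, ht, rfl⟩
    exact (neg_le_of_abs_le (hB t ht)).trans (le_max_left _ _)⟩
  have hne : S.Nonempty := ⟨w 0, 0, by simp, rfl⟩
  set m := sInf S with hm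
  have hmle : ∀ t, 0 ≤ t → m ≤ w t := fun t ht => csInf_le hbd ⟨t, ht, rfl⟩
  have hmT : ∀ ε > 0, ∃ T, 0 ≤ T ∧ ∀ t, T ≤ t → w t ≤ m + ε := by
    intro ε hε
    obtain ⟨_, ⟨T, hT, rfl⟩, hl⟩ := Real.lt_sInf_add_pos hne hε
    exact ⟨T, hT, fun t ht => (hmono T t hT ht).trans hl.le⟩
  have key : ∀ (Ha Hb : En n → En n → ℝ) (a b : En n × ℝ → ℝ) (fa fb : En n → ℝ),
      Continuous a → Continuous b → Continuous fa → Continuous fb → SubSep Ha a b →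
      SubSep Hb b a → (∀ y p, - fa y ≤ Ha y p) → (∀ y p, - fb y ≤ Hb y p) → fa z = 0 → fb z = 0 →
      (∀ t, max (a (z, t)) (b (z, t)) = w t) →
      ∀ δ > 0, ∃ T, ∀ t, T ≤ t → m - δ ≤ a (z, t) := by
    intro Ha Hb a b fa fb hac hbc hfa hfb hsa hsb hHa hHb hza hzb hab δ hδ
    set e := Real.exp (-1) with he
    have he0 : 0 < e := Real.exp_pos _
    have he1 : e < 1 := by rw [he, Real.exp_lt_one_iff]; norm_num
    have hc0 : 0 < e * (1 - e) * δ := by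
      have : 0 < 1 - e := by linarith
      positivity
    obtain ⟨T, hT0, hT⟩ := hmT (e * (1 - e) * δ / 2) (by linarith)
    refine ⟨T, fun t ht => ?_⟩
    by_contra hc
    push Not at hc
    set M := m + e * (1 - e) * δ / 2 with hM
    have haM : ∀ s, T ≤ s → a (z, s) ≤ M := fun s hs =>
      (le_max_left _ _).trans ((hab s).le.trans (hT s hs))
    have hbM : ∀ s, T ≤ s → b (z, s) ≤ M := fun s hs =>
      (le_max_right _ _).trans ((hab s).le.trans (hT s hs))
    have hMa : δ ≤ M - a (z, t) := by linarith
    have s1 : ∀ s ∈ Icc t (t + 1), a (z, s) ≤ M - δ * e := by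
      intro s hs
      have h1 := relaxODE hac hbc hfa hsa hHa z hza M t s (by linarith) hs.1
        (fun s' hs' => hbM s' (by linarith [hs'.1]))
      have h2 : e ≤ Real.exp (-(s - t)) := Real.exp_le_exp.2 (by linarith [hs.2])
      have h3 : δ * e ≤ (M - a (z, t)) * Real.exp (-(s - t)) :=
        mul_le_mul hMa h2 he0.le (by linarith)
      linarith
    have s2 := relaxODE hbc hac hfb hsb hHb z hzb (M - δ * e) t (t + 1) (by linarith) (by linarith) s1
    have ee : -(t + 1 - t) = (-1 : ℝ) := by ring
    rw [ee] at s2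
    have hb0 := hbM t ht
    have hδe : 0 < δ * e := by positivity
    have s3 : b (z, t + 1) ≤ M - e * (1 - e) * δ := by
      have : (M - δ * e - b (z, t)) * e ≥ (- (δ * e)) * e := by gcongr; linarith
      nlinarith
    have s4 : a (z, t + 1) ≤ M - e * (1 - e) * δ := by
      have := s1 (t + 1) ⟨by linarith, le_rfl⟩
      nlinarith
    have s5 := hmle (t + 1) (by linarith)
    have s6 : w (t + 1) ≤ M - e * (1 - e) * δ := by rw [← hab]; exact max_le s4 s3
    linarith
  refine ⟨m, fun δ hδ => ?_⟩
  obtain ⟨T1, _, hT1⟩ := hmT δ hδ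
  obtain ⟨T2, hT2⟩ := key H₁ H₂ u₁ u₂ f₁ f₂ hu₁ hu₂ hf₁ hf₂ h₁ h₂ hH₁ hH₂ hz₁ hz₂
    (fun t => rfl) δ hδ
  obtain ⟨T3, hT3⟩ := key H₂ H₁ u₂ u₁ f₂ f₁ hu₂ hu₁ hf₂ hf₁ h₂ h₁ hH₂ hH₁ hz₂ hz₁
    (fun t => max_comm _ _) δ hδ
  refine ⟨max T1 (max T2 T3), fun t ht => ?_⟩
  have g1 : T1 ≤ t := (le_max_left _ _).trans ht
  have g2 : T2 ≤ t := (le_max_left _ _).trans ((le_max_right _ _).trans ht)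
  have g3 : T3 ≤ t := (le_max_right _ _).trans ((le_max_right _ _).trans ht)
  exact ⟨⟨hT2 t g2, (le_max_left _ _).trans (hT1 t g1)⟩,
    ⟨hT3 t g3, (le_max_right _ _).trans (hT1 t g1)⟩⟩


lemma lim_le (g : ℝ → ℝ) (L₁ L₂ : ℝ) (h2 : ∀ ε > 0, ∃ T, ∀ t, T ≤ t → g t ≤ L₂ + ε)
    (h1 : ∀ ε > 0, ∀ T, ∃ t, T ≤ t ∧ L₁ - ε ≤ g t) : L₁ ≤ L₂ := by
  refine le_of_forall_pos_le_add fun ε hε => ?_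
  obtain ⟨T, hT⟩ := h2 (ε / 2) (by linarith)
  obtain ⟨t, ht, h⟩ := h1 (ε / 2) (by linarith) T
  linarith [hT t ht]

lemma profile {n : ℕ} {F : En n → En n → ℝ} {f : En n → ℝ} {u uo : En n × ℝ → ℝ}
    (hF : ∀ x p, 0 ≤ F x p) (hFc : Coercive F) (hf : Continuous f) (hfp : ZPeriodic f)
    (hf0 : ∀ x, 0 ≤ f x)
    (hu : Continuous u) (huo : Continuous uo) (hup : ZPeriodicST u)
    (h : SubSep (fun x p => F x p - f x) u uo) (B : ℝ)
    (hB : ∀ x t, 0 ≤ t → |u (x, t)| ≤ B) (hBo : ∀ x t, 0 ≤ t → |uo (x, t)| ≤ B) :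
    ∃ V W : En n → ℝ, ZPeriodic V ∧ ZPeriodic W ∧ (∃ L, 0 ≤ L ∧ ∀ x y, V x - V y ≤ L * ‖x - y‖) ∧
      Continuous W ∧ (∀ x, - B ≤ W x) ∧
      (∀ ε > 0, ∃ T, ∀ t, T ≤ t → ∀ x, u (x, t) ≤ V x + ε) ∧
      (∀ ε > 0, ∃ T, ∀ t, T ≤ t → ∀ x, - u (x, t) ≤ - W x + ε) ∧
      (∀ x, ∀ ε > 0, ∀ T, ∃ t, T ≤ t ∧ V x - ε ≤ u (x, t)) ∧
      (∀ x, ∀ ε > 0, ∀ T, ∃ t, T ≤ t ∧ - W x - ε ≤ - u (x, t)) := by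
  obtain ⟨Cf, hCf⟩ := bddPer f hf hfp
  have hB0 : 0 ≤ B := (abs_nonneg _).trans (hB 0 0 le_rfl)
  have hCf0 : 0 ≤ Cf := (hf0 0).trans (hCf 0)
  have hH : ∀ y p, - f y ≤ F y p - f y := fun y p => by linarith [hF y p]
  have cn : ∀ τ > 0, ∃ R > 0, ∀ x m t, 0 ≤ t → (∀ s ∈ Icc t (t + τ), u (x, s) ≤ m) →
      ∀ y, u (y, t + τ) ≤ m + 2 * R * ‖y - x‖ := by
    intro τ hτ
    obtain ⟨r, hr⟩ := hFc (2 * B / τ + Cf + 2 * B + 1)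
    refine ⟨max r 1, by positivity, fun x m t ht hm y => ?_⟩
    have hmB : - B ≤ m := (neg_le_of_abs_le (hB x t ht)).trans (hm t ⟨le_rfl, by linarith⟩)
    have hcc : ∀ y s p, s ∈ Icc t (t + τ) → max r 1 ≤ ‖p‖ → u (y, s) ≤ u (y, s) →
        2 * B / τ < F y p - f y + u (y, s) - uo (y, s) := by
      intro y s p hs hp _
      have h1 := hr y p ((le_max_left _ _).trans hp)
      have h2 := hCf y
      have h3 := neg_le_of_abs_le (hB y s (ht.trans hs.1))
      have h4 := le_of_abs_le (hBo y s (ht.trans hs.1))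
      linarith
    have hi : ∀ y, u (y, t) ≤ m + 2 * B / τ * (t + τ - t) := by
      intro y
      have e : 2 * B / τ * (t + τ - t) = 2 * B := by
        rw [add_sub_cancel_left]; field_simp
      rw [e]
      linarith [le_of_abs_le (hB y t ht)]
    exact (cone hu hu hup hup h h x t (t + τ) (2 * B / τ) (max r 1) m ht (by linarith)
      (by positivity) (by positivity) (fun s hs => ⟨hm s hs, hm s hs⟩)
      (fun y => ⟨hi y, hi y⟩) hcc hcc y).1
  set C := Cf + 2 * B + 1 with hC
  have hC0 : 0 < C := by linarith
  have hE : ∀ τ > 0, ∃ R > 0, ∀ x y t, 0 ≤ t →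
      u (y, t + τ) ≤ u (x, t) + C * τ + 2 * R * ‖y - x‖ := by
    intro τ hτ
    obtain ⟨R, hR, hcn⟩ := cn τ hτ
    refine ⟨R, hR, fun x y t ht => hcn x _ t ht (fun s hs => ?_) y⟩
    have := timeGrowth hu huo hf h hH x (Cf + 2 * B + 1) (fun t ht => by
      linarith [hCf x, le_of_abs_le (hBo x t ht), neg_le_of_abs_le (hB x t ht)]) t s ht hs.1
    have h2 : (Cf + 2 * B + 1) * (s - t) ≤ C * τ :=
      mul_le_mul_of_nonneg_left (by linarith [hs.2]) hC0.le
    linarith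
  choose V hV1 hV2 using fun x => limsup_ex (fun t => u (x, t)) B (hB x)
  choose W' hW1 hW2 using fun x => limsup_ex (fun t => - u (x, t)) B
    (fun t ht => by rw [abs_neg]; exact hB x t ht)
  obtain ⟨R₁, hR₁, hcn₁⟩ := cn 1 one_pos
  have hVV : ∀ x, ∀ ε > 0, ∃ T, ∀ t, T ≤ t → ∀ y, u (y, t) ≤ V x + 2 * R₁ * ‖y - x‖ + ε := by
    intro x ε hε
    obtain ⟨T, hT⟩ := hV1 x ε hε
    refine ⟨max T 0 + 1, fun t ht y => ?_⟩
    have g1 : T ≤ t - 1 := by linarith [le_max_left T 0]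
    have g2 : 0 ≤ t - 1 := by linarith [le_max_right T 0]
    have := hcn₁ x (V x + ε) (t - 1) g2 (fun s hs => hT s (by linarith [hs.1])) y
    rw [sub_add_cancel] at this
    linarith
  have hVL : ∀ x y, V x - V y ≤ 2 * R₁ * ‖x - y‖ := by
    intro y x
    have := lim_le (fun t => u (y, t)) (V y) (V x + 2 * R₁ * ‖y - x‖) (fun ε hε => by
      obtain ⟨T, hT⟩ := hVV x ε hε
      exact ⟨T, fun t ht => hT t ht y⟩) (hV2 y)
    linarith
  have hVp : ZPeriodic V := by
    intro x k
    have e : ∀ t, u (x + intVec n k, t) = u (x, t) := hup x k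
    apply le_antisymm
    · refine lim_le (fun t => u (x, t)) _ _ (hV1 x) ?_
      simpa only [e] using hV2 (x + intVec n k)
    · refine lim_le (fun t => u (x, t)) _ _ ?_ (hV2 x)
      simpa only [e] using hV1 (x + intVec n k)
  have hWp : ZPeriodic W' := by
    intro x k
    have e : ∀ t, u (x + intVec n k, t) = u (x, t) := hup x k
    apply le_antisymm
    · refine lim_le (fun t => - u (x, t)) _ _ (hW1 x) ?_
      simpa only [e] using hW2 (x + intVec n k)
    · refine lim_le (fun t => - u (x, t)) _ _ ?_ (hW2 x)
      simpa only [e] using hW1 (x + intVec n k)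
  have hWm : ∀ τ R, 0 < τ → (∀ x y t, 0 ≤ t → u (y, t + τ) ≤ u (x, t) + C * τ + 2 * R * ‖y - x‖) →
      ∀ x y, W' x ≤ W' y + C * τ + 2 * R * ‖y - x‖ := by
    intro τ R hτ hR x y
    refine le_of_forall_pos_le_add fun ε hε => ?_
    obtain ⟨T, hT⟩ := hW1 y (ε / 2) (by linarith)
    obtain ⟨t, ht, h⟩ := hW2 x (ε / 2) (by linarith) (max T 0)
    have g1 : T ≤ t + τ := by linarith [le_max_left T 0]
    have g2 : 0 ≤ t := by linarith [le_max_right T 0]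
    have := hR x y t g2
    have := hT (t + τ) g1
    linarith
  have hWc : Continuous W' := by
    rw [Metric.continuous_iff]
    intro x ε hε
    obtain ⟨R, hR, hRE⟩ := hE (ε / (4 * C)) (by positivity)
    have hw := hWm _ R (by positivity) hRE
    have e : C * (ε / (4 * C)) = ε / 4 := by field_simp
    rw [e] at hw
    refine ⟨ε / (8 * R), by positivity, fun y hy => ?_⟩
    rw [dist_eq_norm, lt_div_iff₀ (by positivity)] at hy
    have h1 := hw x y
    have h2 := hw y x
    rw [norm_sub_rev x y] at h2
    rw [Real.dist_eq, abs_lt]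
    constructor <;> linarith
  refine ⟨V, fun x => - W' x, hVp, fun x k => by simp only [hWp x k], ⟨2 * R₁, by positivity, hVL⟩,
    hWc.neg, ?_, ?_, ?_, hV2, ?_⟩
  · intro x
    have : W' x ≤ B := lim_le (fun t => - u (x, t)) _ _ (fun ε hε => ⟨0, fun t ht => by
      linarith [neg_le_of_abs_le (hB x t ht)]⟩) (hW2 x)
    linarith
  · intro ε hε
    refine unif_per (fun x t => u (x, t) ≤ V x + ε) (fun x k t => ?_) (fun x => ?_)
    · rw [hup x k t, hVp x k]; exact id
    · obtain ⟨T, hT⟩ := hVV x (ε / 2) (by linarith)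
      refine ⟨T, ?_⟩
      have hc : Continuous fun y : En n => 4 * R₁ * ‖y - x‖ := by fun_prop
      filter_upwards [hc.continuousAt.eventually (gt_mem_nhds
        (show 4 * R₁ * ‖x - x‖ < ε / 2 by simpa using hε))] with y hy t ht
      have h1 := hT t ht y
      have h2 := hVL x y
      rw [norm_sub_rev x y] at h2
      linarith
  · intro ε hε
    refine unif_per (fun x t => - u (x, t) ≤ - (- W' x) + ε) (fun x k t => ?_) (fun x => ?_)
    · rw [hup x k t, hWp x k]; exact id
    · obtain ⟨R, hR, hRE⟩ := hE (ε / (4 * C)) (by positivity)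
      have e : C * (ε / (4 * C)) = ε / 4 := by field_simp
      rw [e] at hRE
      obtain ⟨T, hT⟩ := hW1 x (ε / 4) (by linarith)
      refine ⟨max T 0, ?_⟩
      have hc : Continuous fun y : En n => 2 * R * ‖x - y‖ := by fun_prop
      filter_upwards [hc.continuousAt.eventually (gt_mem_nhds
        (show 2 * R * ‖x - x‖ < ε / 4 by simpa using hε)),
        hWc.continuousAt.eventually (lt_mem_nhds (show W' x - ε / 4 < W' x by linarith))]
        with y hy hy2 t ht
      have h1 := hRE y x t ((le_max_right _ _).trans ht)
      have hpos : 0 < ε / (4 * C) := by positivity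
      have h2 := hT (t + ε / (4 * C)) (by linarith [le_max_left T 0])
      linarith
  · intro x ε hε T
    simpa only [neg_neg] using hW2 x ε hε T

lemma compare {n : ℕ} {F₁ F₂ : En n → En n → ℝ} {f₁ f₂ V₁ V₂ W₁ W₂ : En n → ℝ}
    (hF₁cont : Continuous fun q : En n × En n => F₁ q.1 q.2)
    (hF₂cont : Continuous fun q : En n × En n => F₂ q.1 q.2)
    (hf₁ : Continuous f₁) (hf₂ : Continuous f₂)
    (hA2 : ∀ x : En n, 0 ≤ f₁ x ∧ 0 ≤ f₂ x)
    (hA4 : ∃ lam₀ : ℝ, 0 < lam₀ ∧ lam₀ < 1 ∧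
      ∀ lam : ℝ, lam₀ ≤ lam → lam ≤ 1 → ∀ x : En n, ¬(f₁ x = 0 ∧ f₂ x = 0) →
        ∀ p : En n, F₁ x (lam • p) ≤ lam * F₁ x p ∧ F₂ x (lam • p) ≤ lam * F₂ x p)
    (hV₁p : ZPeriodic V₁) (hV₂p : ZPeriodic V₂) (hW₁p : ZPeriodic W₁) (hW₂p : ZPeriodic W₂)
    (hV₁c : Continuous V₁) (hV₂c : Continuous V₂) (hW₁c : Continuous W₁) (hW₂c : Continuous W₂)
    (L : ℝ) (hL : 0 ≤ L) (hL₁ : ∀ x y, V₁ x - V₁ y ≤ L * ‖x - y‖)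
    (hL₂ : ∀ x y, V₂ x - V₂ y ≤ L * ‖x - y‖)
    (B : ℝ) (hB : ∀ x, - B ≤ W₁ x ∧ - B ≤ W₂ x)
    (hs₁ : StatSubIneq (fun x p => F₁ x p - f₁ x) 1 V₁ V₂ (fun _ => 0))
    (hs₂ : StatSubIneq (fun x p => F₂ x p - f₂ x) 1 V₂ V₁ (fun _ => 0))
    (hS₁ : StatSuperIneq (fun x p => F₁ x p - f₁ x) 1 W₁ W₂ (fun _ => 0))
    (hS₂ : StatSuperIneq (fun x p => F₂ x p - f₂ x) 1 W₂ W₁ (fun _ => 0))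
    (hA : ∀ x, f₁ x = 0 → f₂ x = 0 → V₁ x ≤ W₁ x ∧ V₂ x ≤ W₂ x) :
    ∀ x, V₁ x ≤ W₁ x ∧ V₂ x ≤ W₂ x := by
  obtain ⟨l₀, hl0, hl1, hA4⟩ := hA4
  have gen : ∀ (F : En n → En n → ℝ) (f V Vo W Wo : En n → ℝ) (lam : ℝ), 0 < lam → lam < 1 →
      Continuous (fun q : En n × En n => F q.1 q.2) → Continuous f → Continuous V → Continuous Vo →
      Continuous W → Continuous Wo → (∀ x y, V x - V y ≤ L * ‖x - y‖) →
      StatSubIneq (fun x p => F x p - f x) 1 V Vo (fun _ => 0) →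
      StatSuperIneq (fun x p => F x p - f x) 1 W Wo (fun _ => 0) →
      ∀ xh, (∀ p, F xh (lam • p) ≤ lam * F xh p) →
      (∀ x, lam * V x - W x ≤ lam * V xh - W xh) →
      (1 - lam) * f xh ≤ (lam * Vo xh - Wo xh) - (lam * V xh - W xh) := by
    intro F f V Vo W Wo lam hlam hlam1 hF hf hV hVo hW hWo hVL hs hS xh hh hmax
    have hFl : Continuous fun q : En n × En n => F q.1 (lam⁻¹ • q.2) :=
      hF.comp (by fun_prop : Continuous fun q : En n × En n => (q.1, lam⁻¹ • q.2))
    obtain ⟨p, hp1, hp2⟩ := doubling (a := fun x => lam * V x) (b := W)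
      (ra := fun x => f x - V x + Vo x) (rb := fun x => f x - W x + Wo x)
      (Ha := fun x p => F x (lam⁻¹ • p)) (Hb := F) L hL
      (fun x y => by
        have h1 := hVL x y
        have h2 : 0 ≤ L * ‖x - y‖ := by positivity
        nlinarith) (by fun_prop) hW (by fun_prop) (by fun_prop) hFl hF
      (fun φ hφ x₀ hm => by
        have := hs (fun x => lam⁻¹ * φ x) (contDiff_const.mul hφ) x₀ (by
          filter_upwards [hm] with x hx
          have h3 : lam⁻¹ * (lam * V x - φ x) ≤ lam⁻¹ * (lam * V x₀ - φ x₀) :=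
            mul_le_mul_of_nonneg_left hx (by positivity)
          rw [mul_sub, mul_sub, ← mul_assoc, ← mul_assoc, inv_mul_cancel₀ hlam.ne', one_mul,
            one_mul] at h3
          exact h3)
        rw [grad_smul hφ] at this
        linarith)
      (fun φ hφ x₀ hm => by
        have := hS φ hφ x₀ hm
        simp only at this
        linarith) xh hmax
    have h1 := hh (lam⁻¹ • p)
    rw [smul_smul, mul_inv_cancel₀ hlam.ne', one_smul] at h1
    have h2 := mul_le_mul_of_nonneg_left hp1 hlam.le
    linarith
  have main : ∀ lam, l₀ ≤ lam → lam < 1 → ∀ x, lam * V₁ x - W₁ x ≤ (1 - lam) * B ∧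
      lam * V₂ x - W₂ x ≤ (1 - lam) * B := by
    intro lam hlam hlam1
    have hlp : 0 < lam := by linarith
    obtain ⟨xh, th, _, hmx⟩ := maxPer (fun q : En n × ℝ => max (lam * V₁ q.1 - W₁ q.1)
      (lam * V₂ q.1 - W₂ q.1)) (by fun_prop) (fun x k t => by
        simp only [hV₁p x k, hV₂p x k, hW₁p x k, hW₂p x k]) 0 0 le_rfl
    set w₁ : En n → ℝ := fun x => lam * V₁ x - W₁ x with hw₁
    set w₂ : En n → ℝ := fun x => lam * V₂ x - W₂ x with hw₂
    have hmx' : ∀ x, max (w₁ x) (w₂ x) ≤ max (w₁ xh) (w₂ xh) := fun x => hmx x 0 ⟨le_rfl, le_rfl⟩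
    suffices hz : f₁ xh = 0 ∧ f₂ xh = 0 by
      have h1 := hA xh hz.1 hz.2
      have h2 := hB xh
      have h3 : w₁ xh ≤ (1 - lam) * B := by simp only [hw₁]; nlinarith
      have h4 : w₂ xh ≤ (1 - lam) * B := by simp only [hw₂]; nlinarith
      intro x
      exact ⟨(le_max_left _ _).trans ((hmx' x).trans (max_le h3 h4)),
        (le_max_right _ _).trans ((hmx' x).trans (max_le h3 h4))⟩
    by_contra hz
    have hA4' := hA4 lam hlam hlam1.le xh hz
    have d₁ : w₂ xh ≤ w₁ xh → (1 - lam) * f₁ xh ≤ w₂ xh - w₁ xh := fun hle =>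
      gen F₁ f₁ V₁ V₂ W₁ W₂ lam hlp hlam1 hF₁cont hf₁ hV₁c hV₂c hW₁c hW₂c hL₁ hs₁ hS₁ xh
        (fun p => (hA4' p).1) (fun x => by
          have := (le_max_left _ _).trans (hmx' x)
          rwa [max_eq_left hle] at this)
    have d₂ : w₁ xh ≤ w₂ xh → (1 - lam) * f₂ xh ≤ w₁ xh - w₂ xh := fun hle =>
      gen F₂ f₂ V₂ V₁ W₂ W₁ lam hlp hlam1 hF₂cont hf₂ hV₂c hV₁c hW₂c hW₁c hL₂ hs₂ hS₂ xh
        (fun p => (hA4' p).2) (fun x => by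
          have := (le_max_right _ _).trans (hmx' x)
          rwa [max_eq_right hle] at this)
    have hlpos : 0 < 1 - lam := by linarith
    have n₁ := mul_nonneg hlpos.le (hA2 xh).1
    have n₂ := mul_nonneg hlpos.le (hA2 xh).2
    have heq : w₁ xh = w₂ xh := by
      rcases le_total (w₁ xh) (w₂ xh) with hle | hle
      · linarith [d₂ hle]
      · linarith [d₁ hle]
    have e₁ := d₁ heq.ge
    have e₂ := d₂ heq.le
    apply hz
    constructor
    · have : (1 - lam) * f₁ xh = 0 := by linarith
      exact (mul_eq_zero.1 this).resolve_left hlpos.ne'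
    · have : (1 - lam) * f₂ xh = 0 := by linarith
      exact (mul_eq_zero.1 this).resolve_left hlpos.ne'
  have lim : ∀ (v w : ℝ), (∀ lam, l₀ ≤ lam → lam < 1 → lam * v - w ≤ (1 - lam) * B) → v ≤ w := by
    intro v w hvw
    have hc : Continuous fun lam : ℝ => (1 - lam) * B - (lam * v - w) := by fun_prop
    have ht : Tendsto (fun lam : ℝ => (1 - lam) * B - (lam * v - w)) (𝓝[<] 1)
        (𝓝 ((1 - 1) * B - (1 * v - w))) := (hc.tendsto 1).mono_left nhdsWithin_le_nhds
    have := ge_of_tendsto ht (b := 0) (by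
      filter_upwards [Ico_mem_nhdsLT hl1] with lam hl
      linarith [hvw lam hl.1 hl.2])
    linarith
  intro x
  exact ⟨lim _ _ fun lam h1 h2 => (main lam h1 h2 x).1, lim _ _ fun lam h1 h2 => (main lam h1 h2 x).2⟩


lemma cont_of_lip {n : ℕ} {V : En n → ℝ} (L : ℝ) (hL : 0 ≤ L)
    (h : ∀ x y, V x - V y ≤ L * ‖x - y‖) : Continuous V := by
  have : LipschitzWith ⟨L, hL⟩ V := by
    apply LipschitzWith.of_dist_le_mul
    intro x y
    rw [Real.dist_eq, dist_eq_norm, abs_le]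
    have h1 := h x y
    have h2 := h y x
    rw [norm_sub_rev y x] at h2
    refine ⟨?_, h1⟩
    change -(L * ‖x - y‖) ≤ _
    linarith
  exact this.continuous

/-- Convergence Result 1 (Theorem 1.1, Namah–Roquejoffre type case). -/
theorem stmt4 (n : ℕ) (hn : 1 ≤ n)
(F₁ F₂ : En n → En n → ℝ) (f₁ f₂ : En n → ℝ)
    (hF₁cont : Continuous fun q : En n × En n => F₁ q.1 q.2)
    (hF₂cont : Continuous fun q : En n × En n => F₂ q.1 q.2)
    (hF₁per : ZPeriodicH F₁) (hF₂per : ZPeriodicH F₂)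
    (hF₁coer : Coercive F₁) (hF₂coer : Coercive F₂)
    (hf₁cont : Continuous f₁) (hf₂cont : Continuous f₂)
    (hf₁per : ZPeriodic f₁) (hf₂per : ZPeriodic f₂)
    -- (A2)
    (hA2 : ∀ x : En n, 0 ≤ f₁ x ∧ 0 ≤ f₂ x)
    -- (A3)
    (hA3 : ∃ x : En n, f₁ x = 0 ∧ f₂ x = 0)
    -- (A4)
    (hA4 : ∃ lam₀ : ℝ, 0 < lam₀ ∧ lam₀ < 1 ∧
      ∀ lam : ℝ, lam₀ ≤ lam → lam ≤ 1 → ∀ x : En n, ¬(f₁ x = 0 ∧ f₂ x = 0) →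
        ∀ p : En n, F₁ x (lam • p) ≤ lam * F₁ x p ∧ F₂ x (lam • p) ≤ lam * F₂ x p)
    -- (A5)
    (hA5 : (∀ (x p : En n), 0 ≤ F₁ x p ∧ 0 ≤ F₂ x p) ∧ ∀ x : En n, F₁ x 0 = 0 ∧ F₂ x 0 = 0)
    (u₀₁ u₀₂ : En n → ℝ) (hu₀₁ : Continuous u₀₁) (hu₀₂ : Continuous u₀₂)
    (hu₀₁per : ZPeriodic u₀₁) (hu₀₂per : ZPeriodic u₀₂)
    (u₁ u₂ : En n × ℝ → ℝ) (hu₁per : ZPeriodicST u₁) (hu₂per : ZPeriodicST u₂)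
    (hsol : SysSolution (fun x p => F₁ x p - f₁ x) (fun x p => F₂ x p - f₂ x) u₀₁ u₀₂ u₁ u₂) :
    ∃ v₁ v₂ : En n → ℝ, ZPeriodic v₁ ∧ ZPeriodic v₂ ∧
      ErgSolution (fun x p => F₁ x p - f₁ x) (fun x p => F₂ x p - f₂ x) v₁ v₂ 0 ∧
      UnifTendsTo u₁ v₁ ∧ UnifTendsTo u₂ v₂ := by
  obtain ⟨hc₁, hc₂, ⟨hs₁, hs₂⟩, ⟨hS₁, hS₂⟩, _, _⟩ := hsol
  obtain ⟨hF0, hFz⟩ := hA5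
  obtain ⟨U₁, hU₁⟩ : ∃ U : En n × ℝ → ℝ, U = fun q => u₁ (q.1, max q.2 0) := ⟨_, rfl⟩
  obtain ⟨U₂, hU₂⟩ : ∃ U : En n × ℝ → ℝ, U = fun q => u₂ (q.1, max q.2 0) := ⟨_, rfl⟩
  have cU₁ : Continuous U₁ := hU₁ ▸ ext_cont hc₁
  have cU₂ : Continuous U₂ := hU₂ ▸ ext_cont hc₂
  have pU₁ : ZPeriodicST U₁ := by
    rw [hU₁]; exact fun x k t => hu₁per x k (max t 0)
  have pU₂ : ZPeriodicST U₂ := by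
    rw [hU₂]; exact fun x k t => hu₂per x k (max t 0)
  have hH₁c : Continuous fun q : En n × En n => F₁ q.1 q.2 - f₁ q.1 := by fun_prop
  have hH₂c : Continuous fun q : En n × En n => F₂ q.1 q.2 - f₂ q.1 := by fun_prop
  have hH₁n : Continuous fun q : En n × En n => - (F₁ q.1 (-q.2) - f₁ q.1) :=
    (hH₁c.comp (by fun_prop : Continuous fun q : En n × En n => (q.1, -q.2))).neg
  have hH₂n : Continuous fun q : En n × En n => - (F₂ q.1 (-q.2) - f₂ q.1) :=
    (hH₂c.comp (by fun_prop : Continuous fun q : En n × En n => (q.1, -q.2))).neg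
  have s₁ : SubSep (fun x p => F₁ x p - f₁ x) U₁ U₂ := by
    refine subSep_of_evol hH₁c cU₁ cU₂ ?_
    rw [hU₁, hU₂]; exact ext_sub hs₁
  have s₂ : SubSep (fun x p => F₂ x p - f₂ x) U₂ U₁ := by
    refine subSep_of_evol hH₂c cU₂ cU₁ ?_
    rw [hU₁, hU₂]; exact ext_sub hs₂
  have S₁ : SubSep (fun x p => - (F₁ x (-p) - f₁ x)) (fun q => - U₁ q) (fun q => - U₂ q) := by
    refine subSep_of_evol hH₁n cU₁.neg cU₂.neg ?_
    rw [hU₁, hU₂]; exact evol_neg (ext_super hS₁)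
  have S₂ : SubSep (fun x p => - (F₂ x (-p) - f₂ x)) (fun q => - U₂ q) (fun q => - U₁ q) := by
    refine subSep_of_evol hH₂n cU₂.neg cU₁.neg ?_
    rw [hU₁, hU₂]; exact evol_neg (ext_super hS₂)
  have g₁ : ∀ y p, - f₁ y ≤ F₁ y p - f₁ y := fun y p => by linarith [(hF0 y p).1]
  have g₂ : ∀ y p, - f₂ y ≤ F₂ y p - f₂ y := fun y p => by linarith [(hF0 y p).2]
  have hB : ∃ B, (∀ x t, 0 ≤ t → |U₁ (x, t)| ≤ B) ∧ (∀ x t, 0 ≤ t → |U₂ (x, t)| ≤ B) := by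
    -- lower bound
    have pN₁ : ZPeriodicST (fun q => - U₁ q) := fun x k t => by simp only [pU₁ x k t]
    have pN₂ : ZPeriodicST (fun q => - U₂ q) := fun x k t => by simp only [pU₂ x k t]
    obtain ⟨a, ta, _, ha⟩ := maxPer _ (by fun_prop) (maxPer_max pN₁ pN₂) 0 0 le_rfl
    have low := supBound cU₁.neg cU₂.neg pN₁ pN₂ S₁ S₂ (fun x => by
      simp only [neg_zero, (hFz x).1, (hFz x).2]
      constructor <;> linarith [(hA2 x).1, (hA2 x).2]) _ (fun x =>
        ⟨(le_max_left _ _).trans (ha x 0 ⟨le_rfl, le_rfl⟩),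
          (le_max_right _ _).trans (ha x 0 ⟨le_rfl, le_rfl⟩)⟩)
    set M₁ := max (- U₁ (a, ta)) (- U₂ (a, ta)) with hM₁
    -- upper bound
    obtain ⟨b, tb, _, hb⟩ := maxPer _ (by fun_prop) (maxPer_max pU₁ pU₂) 0 0 le_rfl
    obtain ⟨m, hm⟩ : ∃ m, m = max (U₁ (b, tb)) (U₂ (b, tb)) := ⟨_, rfl⟩
    have hb' : ∀ y, max (U₁ (y, 0)) (U₂ (y, 0)) ≤ m := fun y => by
      rw [hm]; exact hb y 0 ⟨le_rfl, le_rfl⟩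
    obtain ⟨z, hz₁, hz₂⟩ := hA3
    obtain ⟨C₁, hC₁⟩ := bddPer f₁ hf₁cont hf₁per
    obtain ⟨C₂, hC₂⟩ := bddPer f₂ hf₂cont hf₂per
    obtain ⟨r₁, hr₁⟩ := hF₁coer (C₁ + 1)
    obtain ⟨r₂, hr₂⟩ := hF₂coer (C₂ + 1)
    set R := max (max r₁ r₂) 1 with hR
    have hR0 : 0 < R := lt_of_lt_of_le one_pos (le_max_right _ _)
    have hRr₁ : r₁ ≤ R := (le_max_left _ _).trans (le_max_left _ _)
    have hRr₂ : r₂ ≤ R := (le_max_right _ _).trans (le_max_left _ _)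
    have up : ∀ T, 0 ≤ T → ∀ y, U₁ (y, T) ≤ m + 2 * R * ‖y - z‖ ∧ U₂ (y, T) ≤ m + 2 * R * ‖y - z‖ := by
      intro T hT y
      refine cone cU₁ cU₂ pU₁ pU₂ s₁ s₂ z 0 T 0 R m le_rfl hT le_rfl hR0 (fun s hs => ?_)
        (fun y => ?_) (fun y s p hs hp hle => ?_) (fun y s p hs hp hle => ?_) y
      · have := (maxMono cU₁ cU₂ hf₁cont hf₂cont s₁ s₂ g₁ g₂ z hz₁ hz₂ 0 s le_rfl hs.1).trans (hb' z)
        exact ⟨(le_max_left _ _).trans this, (le_max_right _ _).trans this⟩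
      · rw [zero_mul, add_zero]
        exact ⟨(le_max_left _ _).trans (hb' y), (le_max_right _ _).trans (hb' y)⟩
      · linarith [hr₁ y p (hRr₁.trans hp), hC₁ y]
      · linarith [hr₂ y p (hRr₂.trans hp), hC₂ y]
    obtain ⟨K, hK, hcell⟩ := cell n
    obtain ⟨D, hD⟩ := hK.bddAbove_image (f := fun y => m + 2 * R * ‖y - z‖) (by fun_prop)
    have up' : ∀ x t, 0 ≤ t → U₁ (x, t) ≤ D ∧ U₂ (x, t) ≤ D := by
      intro x t ht
      obtain ⟨k, hk⟩ := hcell x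
      have h1 := up t ht (x + intVec n k)
      rw [pU₁, pU₂] at h1
      have h2 := hD ⟨_, hk, rfl⟩
      simp only at h2
      exact ⟨h1.1.trans h2, h1.2.trans h2⟩
    refine ⟨max M₁ D, fun x t ht => ?_, fun x t ht => ?_⟩
    · rw [abs_le]
      have h1 : - U₁ (x, t) ≤ M₁ := (low x t ht).1
      have h2 := (up' x t ht).1
      exact ⟨by linarith [le_max_left M₁ D], by linarith [le_max_right M₁ D]⟩
    · rw [abs_le]
      have h1 : - U₂ (x, t) ≤ M₁ := (low x t ht).2
      have h2 := (up' x t ht).2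
      exact ⟨by linarith [le_max_left M₁ D], by linarith [le_max_right M₁ D]⟩
  obtain ⟨B, hB₁, hB₂⟩ := hB
  obtain ⟨V₁, W₁, pV₁, pW₁, ⟨L₁, hL₁0, hL₁⟩, cW₁, bW₁, uV₁, uW₁, rV₁, rW₁⟩ :=
    profile (fun x p => (hF0 x p).1) hF₁coer hf₁cont hf₁per (fun x => (hA2 x).1) cU₁ cU₂ pU₁ s₁ B
      hB₁ hB₂
  obtain ⟨V₂, W₂, pV₂, pW₂, ⟨L₂, hL₂0, hL₂⟩, cW₂, bW₂, uV₂, uW₂, rV₂, rW₂⟩ :=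
    profile (fun x p => (hF0 x p).2) hF₂coer hf₂cont hf₂per (fun x => (hA2 x).2) cU₂ cU₁ pU₂ s₂ B
      hB₂ hB₁
  have cV₁ : Continuous V₁ := cont_of_lip L₁ hL₁0 hL₁
  have cV₂ : Continuous V₂ := cont_of_lip L₂ hL₂0 hL₂
  have t₁ := stab hH₁c cU₁ cV₂ s₁ uV₁ uV₂ rV₁
  have t₂ := stab hH₂c cU₂ cV₁ s₂ uV₂ uV₁ rV₂
  have T₁ : StatSuperIneq (fun x p => F₁ x p - f₁ x) 1 W₁ W₂ (fun _ => 0) :=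
    stat_neg (H := fun x p => F₁ x p - f₁ x) (stab hH₁n cU₁.neg cW₂.neg S₁ uW₁ uW₂ rW₁)
  have T₂ : StatSuperIneq (fun x p => F₂ x p - f₂ x) 1 W₂ W₁ (fun _ => 0) :=
    stat_neg (H := fun x p => F₂ x p - f₂ x) (stab hH₂n cU₂.neg cW₁.neg S₂ uW₂ uW₁ rW₂)
  have hz : ∀ x, f₁ x = 0 → f₂ x = 0 → V₁ x ≤ W₁ x ∧ V₂ x ≤ W₂ x := by
    intro z hz₁ hz₂
    obtain ⟨m, hm⟩ := conv_zero cU₁ cU₂ hf₁cont hf₂cont s₁ s₂ g₁ g₂ z hz₁ hz₂ B (hB₁ z)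
    have a₁ : V₁ z ≤ m := lim_le (fun t => U₁ (z, t)) _ _ (fun ε hε => by
      obtain ⟨T, hT⟩ := hm ε hε
      exact ⟨T, fun t ht => (hT t ht).1.2⟩) (rV₁ z)
    have a₂ : V₂ z ≤ m := lim_le (fun t => U₂ (z, t)) _ _ (fun ε hε => by
      obtain ⟨T, hT⟩ := hm ε hε
      exact ⟨T, fun t ht => (hT t ht).2.2⟩) (rV₂ z)
    have b₁ : - W₁ z ≤ - m := lim_le (fun t => - U₁ (z, t)) _ _ (fun ε hε => by
      obtain ⟨T, hT⟩ := hm ε hε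
      exact ⟨T, fun t ht => by linarith [(hT t ht).1.1]⟩) (rW₁ z)
    have b₂ : - W₂ z ≤ - m := lim_le (fun t => - U₂ (z, t)) _ _ (fun ε hε => by
      obtain ⟨T, hT⟩ := hm ε hε
      exact ⟨T, fun t ht => by linarith [(hT t ht).2.1]⟩) (rW₂ z)
    constructor <;> linarith
  have hcmp := compare hF₁cont hF₂cont hf₁cont hf₂cont hA2 hA4 pV₁ pV₂ pW₁ pW₂ cV₁ cV₂ cW₁ cW₂
    (max L₁ L₂) (hL₁0.trans (le_max_left _ _))
    (fun x y => (hL₁ x y).trans (mul_le_mul_of_nonneg_right (le_max_left _ _) (norm_nonneg _)))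
    (fun x y => (hL₂ x y).trans (mul_le_mul_of_nonneg_right (le_max_right _ _) (norm_nonneg _)))
    B (fun x => ⟨bW₁ x, bW₂ x⟩) t₁ t₂ T₁ T₂ hz
  have r₁ : ∀ x, W₁ x ≤ V₁ x := fun x => by
    have := lim_le (fun t => - U₁ (x, t)) (- V₁ x) (- W₁ x) (fun ε hε => by
      obtain ⟨T, hT⟩ := uW₁ ε hε
      exact ⟨T, fun t ht => hT t ht x⟩) (fun ε hε T => by
      obtain ⟨T', hT'⟩ := uV₁ ε hε
      exact ⟨max T T', le_max_left _ _, by linarith [hT' (max T T') (le_max_right _ _) x]⟩)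
    linarith
  have r₂ : ∀ x, W₂ x ≤ V₂ x := fun x => by
    have := lim_le (fun t => - U₂ (x, t)) (- V₂ x) (- W₂ x) (fun ε hε => by
      obtain ⟨T, hT⟩ := uW₂ ε hε
      exact ⟨T, fun t ht => hT t ht x⟩) (fun ε hε T => by
      obtain ⟨T', hT'⟩ := uV₂ ε hε
      exact ⟨max T T', le_max_left _ _, by linarith [hT' (max T T') (le_max_right _ _) x]⟩)
    linarith
  have e₁ : W₁ = V₁ := funext fun x => le_antisymm (r₁ x) (hcmp x).1
  have e₂ : W₂ = V₂ := funext fun x => le_antisymm (r₂ x) (hcmp x).2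
  rw [e₁, e₂] at T₁ T₂
  rw [e₁] at uW₁
  rw [e₂] at uW₂
  refine ⟨V₁, V₂, pV₁, pV₂, ⟨cV₁, cV₂, ⟨t₁, t₂⟩, ⟨T₁, T₂⟩⟩, fun ε hε => ?_, fun ε hε => ?_⟩
  · obtain ⟨T, hT⟩ := uV₁ ε hε
    obtain ⟨T', hT'⟩ := uW₁ ε hε
    refine ⟨max (max T T') 0, fun t ht x => ?_⟩
    have h0 : 0 ≤ t := (le_max_right _ _).trans ht
    have h1 := hT t ((le_max_left _ _).trans ((le_max_left _ _).trans ht)) x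
    have h2 := hT' t ((le_max_right _ _).trans ((le_max_left _ _).trans ht)) x
    have h3 : U₁ (x, t) = u₁ (x, t) := by rw [hU₁]; simp only [max_eq_left h0]
    rw [h3] at h1 h2
    rw [abs_le]
    constructor <;> linarith
  · obtain ⟨T, hT⟩ := uV₂ ε hε
    obtain ⟨T', hT'⟩ := uW₂ ε hε
    refine ⟨max (max T T') 0, fun t ht x => ?_⟩
    have h0 : 0 ≤ t := (le_max_right _ _).trans ht
    have h1 := hT t ((le_max_left _ _).trans ((le_max_left _ _).trans ht)) x
    have h2 := hT' t ((le_max_right _ _).trans ((le_max_left _ _).trans ht)) x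
    have h3 : U₂ (x, t) = u₂ (x, t) := by rw [hU₂]; simp only [max_eq_left h0]
    rw [h3] at h1 h2
    rw [abs_le]
    constructor <;> linarith
end

section
/- Assume H_i(x,p) = F_i(x,p) − f_i(x) with F_i, f_i satisfying (A1)–(A5). Then the ergodic constant of (E) equals 0; that is, there exists a pair (v₁, v₂) of continuous functions on 𝕋^n that is a viscosity solution of the stationary system F₁(x, Dv₁) + v₁ − v₂ = f₁(x), F₂(x, Dv₂) + v₂ − v₁ = f₂(x) in 𝕋^n, and 0 is the unique constant c for which (E) admits a viscosity solution. -/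
open MeasureTheory Filter Topology Set

namespace St5

variable {n : ℕ}

lemma grad_eq (φ : En n → ℝ) (x : En n) :
    gradient φ x = (InnerProductSpace.toDual ℝ (En n)).symm (fderiv ℝ φ x) := rfl

lemma grad_cont {φ : En n → ℝ} (h : ContDiff ℝ 1 φ) : Continuous (gradient φ) := by
  have : gradient φ = fun x => (InnerProductSpace.toDual ℝ (En n)).symm (fderiv ℝ φ x) := rfl
  rw [this]
  exact (LinearIsometryEquiv.continuous _).comp (h.continuous_fderiv one_ne_zero)

lemma quad_contDiff (K C : ℝ) (a : En n) :
    ContDiff ℝ 1 (fun y : En n => K * ‖y - a‖ ^ 2 + C) := by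
  have : ContDiff ℝ 1 (fun y : En n => ‖y - a‖ ^ 2) :=
    (contDiff_id.sub contDiff_const).norm_sq ℝ
  exact (contDiff_const.mul this).add contDiff_const

lemma quad_grad (K C : ℝ) (a x : En n) :
    HasGradientAt (fun y : En n => K * ‖y - a‖ ^ 2 + C) ((2 * K) • (x - a)) x := by
  have h1 : HasFDerivAt (fun y : En n => y - a) (ContinuousLinearMap.id ℝ (En n)) x :=
    (hasFDerivAt_id x).sub_const a
  have h2 := ((h1.norm_sq).const_mul K).add_const C
  rw [hasGradientAt_iff_hasFDerivAt]
  refine h2.congr_fderiv ?_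
  ext v
  simp [inner_smul_left]
  ring

lemma add_grad {φ ψ : En n → ℝ} {p q x : En n} (h : HasGradientAt φ p x)
    (h' : HasGradientAt ψ q x) : HasGradientAt (fun y => φ y + ψ y) (p + q) x := by
  rw [hasGradientAt_iff_hasFDerivAt] at *
  rw [map_add]
  exact h.add h'

lemma c1_grad {φ : En n → ℝ} (h : ContDiff ℝ 1 φ) (x : En n) :
    HasGradientAt φ (gradient φ x) x :=
  ((h.differentiable one_ne_zero) x).hasGradientAt

/-- Lipschitz estimate. -/
lemma lip_of_test (L : NNReal) (w v : En n → ℝ) (C : ℝ) (hw : Continuous w)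
    (hv : LipschitzWith L v) (hwv : ∀ x, w x ≤ v x + C)
    (ht : ∀ φ : En n → ℝ, ContDiff ℝ 1 φ → ∀ x₀, IsLocalMax (fun x => w x - φ x) x₀ →
      ‖gradient φ x₀‖ ≤ L) : LipschitzWith L w := by
  have key : ∀ L' : ℝ, (L : ℝ) < L' → ∀ x y, w y ≤ w x + L' * dist y x := by
    intro L' hL' x y
    have hL0 : (0 : ℝ) ≤ L := L.2
    set g : En n → ℝ := fun y => w y - L' * ‖y - x‖ with hg
    have hgc : Continuous g := by fun_prop
    set R : ℝ := (|v x + C - w x| + 1) / (L' - L) + dist y x with hR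
    have hd : 0 < L' - L := by linarith
    have hR0 : 0 ≤ R := by positivity
    obtain ⟨m, hm, hmax⟩ := (isCompact_closedBall x R).exists_isMaxOn
      ⟨x, Metric.mem_closedBall_self hR0⟩ hgc.continuousOn
    have hglob : ∀ u, g u ≤ g m := by
      intro u
      by_cases hu : u ∈ Metric.closedBall x R
      · exact hmax hu
      · have hx : g x ≤ g m := hmax (Metric.mem_closedBall_self hR0)
        have h1 : R < ‖u - x‖ := by
          rw [Metric.mem_closedBall, dist_eq_norm] at hu; linarith
        have h2 := hv.dist_le_mul u x
        rw [Real.dist_eq, dist_eq_norm] at h2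
        have h3 := le_abs_self (v u - v x)
        have h4 := hwv u
        have h5 : (|v x + C - w x| + 1) ≤ (L' - L) * R := by
          rw [hR, mul_add, mul_div_cancel₀ _ hd.ne']
          have : 0 ≤ (L' - L) * dist y x := by positivity
          linarith
        have h6 : (L' - L) * R ≤ (L' - L) * ‖u - x‖ := by gcongr
        have h7 := le_abs_self (v x + C - w x)
        have h8 : g x = w x := by simp [hg]
        have h9 : g u ≤ g x := by
          rw [h8]; simp only [hg]; nlinarith
        linarith
    by_cases hmx : m = x
    · have := hglob y
      rw [hmx] at this
      simp [hg] at this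
      rw [dist_eq_norm]; linarith
    · exfalso
      have hdp : 0 < ‖m - x‖ := norm_pos_iff.mpr (sub_ne_zero.mpr hmx)
      set d := ‖m - x‖ with hdd
      have := ht (fun y => (L' / (2 * d)) * ‖y - x‖ ^ 2 + L' * d / 2) (quad_contDiff _ _ _) m ?_
      · rw [(quad_grad _ _ _ _).gradient, norm_smul, ← hdd, Real.norm_eq_abs,
          abs_of_nonneg (by have : 0 ≤ L' := by linarith
                            positivity)] at this
        have h : 2 * (L' / (2 * d)) * d = L' := by field_simp
        linarith
      · refine Filter.Eventually.of_forall fun u => ?_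
        have h1 := hglob u
        simp only [hg] at h1
        have h2 : L' / (2 * d) * ‖m - x‖ ^ 2 + L' * d / 2 = L' * d := by
          rw [← hdd]; field_simp; ring
        have h3 : L' * ‖u - x‖ ≤ L' / (2 * d) * ‖u - x‖ ^ 2 + L' * d / 2 := by
          have e : L' / (2 * d) * ‖u - x‖ ^ 2 + L' * d / 2 - L' * ‖u - x‖
            = L' / (2 * d) * (‖u - x‖ - d) ^ 2 := by field_simp; ring
          have : 0 ≤ L' / (2 * d) * (‖u - x‖ - d) ^ 2 := by
            have : 0 ≤ L' := by linarith
            positivity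
          linarith
        simp only [h2]
        linarith
  refine LipschitzWith.of_le_add_mul L fun x y => ?_
  refine le_of_forall_pos_le_add fun ε hε => ?_
  have h := key (L + ε / (dist x y + 1)) (by
    have : 0 < ε / (dist x y + 1) := by positivity
    linarith) y x
  have h2 : ε / (dist x y + 1) * dist x y ≤ ε := by
    rw [div_mul_eq_mul_div, div_le_iff₀ (by positivity)]
    nlinarith [dist_nonneg (x := x) (y := y)]
  nlinarith

lemma sub_pointwise (F : En n → En n → ℝ) (w wo ρ : En n → ℝ) (hF : ∀ x p, 0 ≤ F x p)
    (hw : Continuous w) (hwo : Continuous wo) (hρ : Continuous ρ)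
    (hs : StatSubIneq F 1 w wo ρ) (x : En n) : w x - wo x ≤ ρ x := by
  by_contra hcon
  push Not at hcon
  have hev : ∀ᶠ y in 𝓝 x, ρ y < w y - wo y :=
    hρ.continuousAt.eventually_lt (hw.sub hwo).continuousAt hcon
  obtain ⟨r, hr, hball⟩ := Metric.nhds_basis_closedBall.eventually_iff.mp hev
  obtain ⟨b, hb, hbmax⟩ := (isCompact_closedBall x r).exists_isMaxOn
      ⟨x, Metric.mem_closedBall_self hr.le⟩ hw.continuousOn
  set K : ℝ := (w b - w x + 1) / r ^ 2 with hK
  have hKr : K * r ^ 2 = w b - w x + 1 := by rw [hK]; field_simp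
  obtain ⟨m, hm, hmax⟩ := (isCompact_closedBall x r).exists_isMaxOn
      ⟨x, Metric.mem_closedBall_self hr.le⟩
      (f := fun y => w y - (K * ‖y - x‖ ^ 2 + 0)) (by fun_prop)
  have h1 : w x ≤ w m - K * ‖m - x‖ ^ 2 := by
    have := hmax (Metric.mem_closedBall_self hr.le)
    simpa using this
  have hmb : w m ≤ w b := hbmax hm
  have hlt : dist m x < r := by
    rcases lt_or_eq_of_le (Metric.mem_closedBall.mp hm) with h | h
    · exact h
    · rw [dist_eq_norm] at h
      rw [h] at h1
      linarith
  have hloc : IsLocalMax (fun y => w y - (K * ‖y - x‖ ^ 2 + 0)) m := by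
    filter_upwards [Metric.isOpen_ball.mem_nhds (Metric.mem_ball.mpr hlt)] with u hu
    exact hmax (Metric.ball_subset_closedBall hu)
  have := hs _ (quad_contDiff K 0 x) m hloc
  have h2 := hF m (gradient (fun y => K * ‖y - x‖ ^ 2 + 0) m)
  have h3 := hball hm
  linarith

/-- Periodic continuous functions: values reduce to a compact cube. -/
lemma exists_cube : ∃ Q : Set (En n), IsCompact Q ∧ Q.Nonempty ∧
    ∀ x : En n, ∃ k : Fin n → ℤ, x + intVec n k ∈ Q := by
  refine ⟨WithLp.toLp 2 '' (Set.Icc (0 : Fin n → ℝ) 1), ?_, ?_, ?_⟩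
  · exact isCompact_Icc.image (PiLp.continuous_toLp 2 _)
  · exact ⟨_, _, ⟨le_refl _, zero_le_one⟩, rfl⟩
  · intro x
    refine ⟨fun i => -⌊x i⌋, fun i => Int.fract (x i), ⟨?_, ?_⟩, ?_⟩
    · intro i; exact Int.fract_nonneg _
    · intro i; exact (Int.fract_lt_one _).le
    · ext i
      simp [intVec, Int.fract, sub_eq_add_neg]

lemma per_min {f : En n → ℝ} (hf : Continuous f) (hp : ZPeriodic f) :
    ∃ m, ∀ x, f m ≤ f x := by
  obtain ⟨Q, hQ, hne, hc⟩ := exists_cube (n := n)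
  obtain ⟨m, hm, hmin⟩ := hQ.exists_isMinOn hne hf.continuousOn
  refine ⟨m, fun x => ?_⟩
  obtain ⟨k, hk⟩ := hc x
  rw [← hp x k]
  exact hmin hk

lemma per_bdd {f : En n → ℝ} (hf : Continuous f) (hp : ZPeriodic f) :
    ∃ M, ∀ x, f x ≤ M := by
  obtain ⟨m, hm⟩ := per_min (f := fun x => - f x) hf.neg (fun x k => by simp [hp x k])
  exact ⟨f m, fun x => by have := hm x; linarith⟩

structure Cls (F₁ F₂ : En n → En n → ℝ) (f₁ f₂ : En n → ℝ) (L : NNReal)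
    (w₁ w₂ : En n → ℝ) : Prop where
  lip1 : LipschitzWith L w₁
  lip2 : LipschitzWith L w₂
  sub1 : StatSubIneq F₁ 1 w₁ w₂ f₁
  sub2 : StatSubIneq F₂ 1 w₂ w₁ f₂
  dif1 : ∀ x, w₁ x - w₂ x ≤ f₁ x
  dif2 : ∀ x, w₂ x - w₁ x ≤ f₂ x
  bd1 : ∀ x, f₁ x = 0 → f₂ x = 0 → w₁ x ≤ 0
  bd2 : ∀ x, f₁ x = 0 → f₂ x = 0 → w₂ x ≤ 0

lemma Cls.swap {F₁ F₂ : En n → En n → ℝ} {f₁ f₂ : En n → ℝ} {L : NNReal}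
    {w₁ w₂ : En n → ℝ} (h : Cls F₁ F₂ f₁ f₂ L w₁ w₂) : Cls F₂ F₁ f₂ f₁ L w₂ w₁ :=
  ⟨h.lip2, h.lip1, h.sub2, h.sub1, h.dif2, h.dif1, fun x a b => h.bd2 x b a,
    fun x a b => h.bd1 x b a⟩

lemma stat_translate {F : En n → En n → ℝ} {w wo f : En n → ℝ} (k : Fin n → ℤ)
    (hF : ZPeriodicH F) (hf : ZPeriodic f) (h : StatSubIneq F 1 w wo f) :
    StatSubIneq F 1 (fun x => w (x + intVec n k)) (fun x => wo (x + intVec n k)) f := by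
  intro φ hφ x₀ hmax
  have h1 := h (fun x => φ (x - intVec n k)) (hφ.comp (contDiff_id.sub contDiff_const))
    (x₀ + intVec n k) ?_
  · have hg : gradient (fun x => φ (x - intVec n k)) (x₀ + intVec n k) = gradient φ x₀ := by
      rw [grad_eq, grad_eq, fderiv_comp_sub, add_sub_cancel_right]
    rw [hg, hF, hf] at h1
    exact h1
  · have hc : Tendsto (fun x : En n => x - intVec n k) (𝓝 (x₀ + intVec n k)) (𝓝 x₀) := by
      have : Continuous (fun x : En n => x - intVec n k) := by fun_prop
      simpa using this.tendsto (x₀ + intVec n k)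
    filter_upwards [hc.eventually hmax] with y hy
    simpa using hy

lemma Cls.translate {F₁ F₂ : En n → En n → ℝ} {f₁ f₂ : En n → ℝ} {L : NNReal}
    {w₁ w₂ : En n → ℝ} (h : Cls F₁ F₂ f₁ f₂ L w₁ w₂) (k : Fin n → ℤ)
    (hF₁ : ZPeriodicH F₁) (hF₂ : ZPeriodicH F₂) (hf₁ : ZPeriodic f₁) (hf₂ : ZPeriodic f₂) :
    Cls F₁ F₂ f₁ f₂ L (fun x => w₁ (x + intVec n k)) (fun x => w₂ (x + intVec n k)) where
  lip1 := LipschitzWith.of_dist_le_mul fun x y => by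
    simpa using h.lip1.dist_le_mul (x + intVec n k) (y + intVec n k)
  lip2 := LipschitzWith.of_dist_le_mul fun x y => by
    simpa using h.lip2.dist_le_mul (x + intVec n k) (y + intVec n k)
  sub1 := stat_translate k hF₁ hf₁ h.sub1
  sub2 := stat_translate k hF₂ hf₂ h.sub2
  dif1 := fun x => by have := h.dif1 (x + intVec n k); rwa [hf₁] at this
  dif2 := fun x => by have := h.dif2 (x + intVec n k); rwa [hf₂] at this
  bd1 := fun x a b => h.bd1 _ (by rw [hf₁, a]) (by rw [hf₂, b])
  bd2 := fun x a b => h.bd2 _ (by rw [hf₁, a]) (by rw [hf₂, b])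

noncomputable def V (F₁ F₂ : En n → En n → ℝ) (f₁ f₂ : En n → ℝ) (L : NNReal) (x : En n) : ℝ :=
  sSup {a | ∃ w₁ w₂, Cls F₁ F₂ f₁ f₂ L w₁ w₂ ∧ a = w₁ x}

structure Hyp (F₁ F₂ : En n → En n → ℝ) (f₁ f₂ : En n → ℝ) (L : NNReal) : Prop where
  c1 : Continuous fun q : En n × En n => F₁ q.1 q.2
  c2 : Continuous fun q : En n × En n => F₂ q.1 q.2
  p1 : ZPeriodicH F₁
  p2 : ZPeriodicH F₂
  d1 : Continuous f₁
  d2 : Continuous f₂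
  q1 : ZPeriodic f₁
  q2 : ZPeriodic f₂
  n1 : ∀ x, 0 ≤ f₁ x
  n2 : ∀ x, 0 ≤ f₂ x
  z : ∃ x : En n, f₁ x = 0 ∧ f₂ x = 0
  m1 : ∀ x p, 0 ≤ F₁ x p
  m2 : ∀ x p, 0 ≤ F₂ x p
  o1 : ∀ x, F₁ x 0 = 0
  o2 : ∀ x, F₂ x 0 = 0
  l1 : ∀ x p, F₁ x p ≤ f₁ x + f₂ x → ‖p‖ ≤ L
  l2 : ∀ x p, F₂ x p ≤ f₁ x + f₂ x → ‖p‖ ≤ L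

section
variable {F₁ F₂ : En n → En n → ℝ} {f₁ f₂ : En n → ℝ} {L : NNReal}

lemma Hyp.swap (h : Hyp F₁ F₂ f₁ f₂ L) : Hyp F₂ F₁ f₂ f₁ L :=
  ⟨h.c2, h.c1, h.p2, h.p1, h.d2, h.d1, h.q2, h.q1, h.n2, h.n1,
   h.z.imp fun _ a => a.symm, h.m2, h.m1, h.o2, h.o1,
   fun x p a => h.l2 x p (by linarith), fun x p a => h.l1 x p (by linarith)⟩

lemma zero_sub {F : En n → En n → ℝ} {f : En n → ℝ} (ho : ∀ x, F x 0 = 0) (hn : ∀ x, 0 ≤ f x) :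
    StatSubIneq F 1 (fun _ => 0) (fun _ => 0) f := by
  intro φ hφ x₀ hmax
  have h0 := hmax.fderiv_eq_zero
  have h1 : fderiv ℝ (fun x => (0 : ℝ) - φ x) x₀ = - fderiv ℝ φ x₀ := by
    simp
  have h2 : gradient φ x₀ = 0 := by
    rw [grad_eq]
    rw [h1, neg_eq_zero] at h0
    rw [h0, map_zero]
  rw [h2, ho]
  simpa using hn x₀

lemma Hyp.zero (h : Hyp F₁ F₂ f₁ f₂ L) : Cls F₁ F₂ f₁ f₂ L (fun _ => 0) (fun _ => 0) where
  lip1 := LipschitzWith.const' _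
  lip2 := LipschitzWith.const' _
  sub1 := zero_sub h.o1 h.n1
  sub2 := zero_sub h.o2 h.n2
  dif1 := fun x => by simpa using h.n1 x
  dif2 := fun x => by simpa using h.n2 x
  bd1 := fun _ _ _ => le_refl _
  bd2 := fun _ _ _ => le_refl _

lemma Hyp.bdd (h : Hyp F₁ F₂ f₁ f₂ L) (x : En n) :
    BddAbove {a | ∃ w₁ w₂, Cls F₁ F₂ f₁ f₂ L w₁ w₂ ∧ a = w₁ x} := by
  obtain ⟨z, hz1, hz2⟩ := h.z
  refine ⟨L * dist x z, ?_⟩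
  rintro a ⟨w₁, w₂, hw, rfl⟩
  have h1 := hw.lip1.dist_le_mul x z
  rw [Real.dist_eq] at h1
  have h2 := le_abs_self (w₁ x - w₁ z)
  have h3 := hw.bd1 z hz1 hz2
  linarith

lemma Hyp.le_V (h : Hyp F₁ F₂ f₁ f₂ L) {w₁ w₂} (hw : Cls F₁ F₂ f₁ f₂ L w₁ w₂) (x : En n) :
    w₁ x ≤ V F₁ F₂ f₁ f₂ L x := le_csSup (h.bdd x) ⟨w₁, w₂, hw, rfl⟩

lemma Hyp.le_V2 (h : Hyp F₁ F₂ f₁ f₂ L) {w₁ w₂} (hw : Cls F₁ F₂ f₁ f₂ L w₁ w₂) (x : En n) :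
    w₂ x ≤ V F₂ F₁ f₂ f₁ L x := h.swap.le_V hw.swap x

lemma Hyp.V_le (h : Hyp F₁ F₂ f₁ f₂ L) {x : En n} {b : ℝ}
    (hb : ∀ w₁ w₂, Cls F₁ F₂ f₁ f₂ L w₁ w₂ → w₁ x ≤ b) : V F₁ F₂ f₁ f₂ L x ≤ b := by
  refine csSup_le ⟨_, _, _, h.zero, rfl⟩ ?_
  rintro a ⟨w₁, w₂, hw, rfl⟩
  exact hb _ _ hw

lemma Hyp.V_lip (h : Hyp F₁ F₂ f₁ f₂ L) : LipschitzWith L (V F₁ F₂ f₁ f₂ L) := by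
  refine LipschitzWith.of_le_add_mul L fun x y => h.V_le fun w₁ w₂ hw => ?_
  have h1 := hw.lip1.dist_le_mul x y
  rw [Real.dist_eq] at h1
  have h2 := le_abs_self (w₁ x - w₁ y)
  have h3 := h.le_V hw y
  linarith

lemma Hyp.V_per (h : Hyp F₁ F₂ f₁ f₂ L) : ZPeriodic (V F₁ F₂ f₁ f₂ L) := by
  have key : ∀ x k, V F₁ F₂ f₁ f₂ L (x + intVec n k) ≤ V F₁ F₂ f₁ f₂ L x := by
    intro x k
    refine h.V_le fun w₁ w₂ hw => ?_
    exact h.le_V (hw.translate k h.p1 h.p2 h.q1 h.q2) x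
  intro x k
  refine le_antisymm (key x k) ?_
  have h1 := key (x + intVec n k) (-k)
  have h2 : x + intVec n k + intVec n (-k) = x := by
    ext i; simp [intVec]
  rwa [h2] at h1

lemma Hyp.V_dif (h : Hyp F₁ F₂ f₁ f₂ L) (x : En n) :
    V F₁ F₂ f₁ f₂ L x - V F₂ F₁ f₂ f₁ L x ≤ f₁ x := by
  rw [sub_le_iff_le_add]
  refine h.V_le fun w₁ w₂ hw => ?_
  have h1 := hw.dif1 x
  have h2 := h.le_V2 hw x
  linarith

lemma Hyp.V_bd (h : Hyp F₁ F₂ f₁ f₂ L) (x : En n) (h1 : f₁ x = 0) (h2 : f₂ x = 0) :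
    V F₁ F₂ f₁ f₂ L x = 0 :=
  le_antisymm (h.V_le fun _ _ hw => hw.bd1 x h1 h2) (h.le_V h.zero x)

lemma Hyp.V_sub (h : Hyp F₁ F₂ f₁ f₂ L) :
    StatSubIneq F₁ 1 (V F₁ F₂ f₁ f₂ L) (V F₂ F₁ f₂ f₁ L) f₁ := by
  intro φ hφ x₀ hmax
  by_contra hcon
  push Not at hcon
  have hc1 := h.V_lip.continuous
  have hc2 := h.swap.V_lip.continuous
  set v₁ := V F₁ F₂ f₁ f₂ L
  set v₂ := V F₂ F₁ f₂ f₁ L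
  have hgc := grad_cont hφ
  have hφc := hφ.continuous
  have hfc := h.d1
  set G : En n → ℝ := fun x => F₁ x (gradient φ x + (2 * (1 : ℝ)) • (x - x₀))
    + (v₁ x₀ + φ x - φ x₀) - v₂ x - f₁ x with hG
  have hGc : Continuous G := by
    have : Continuous fun x => F₁ x (gradient φ x + (2 * (1 : ℝ)) • (x - x₀)) :=
      h.c1.comp (f := fun x => (x, gradient φ x + (2 * (1 : ℝ)) • (x - x₀))) (by fun_prop)
    exact ((this.add ((continuous_const.add hφc).sub continuous_const)).sub hc2).sub hfc
  have hG0 : 0 < G x₀ := by simp [hG]; linarith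
  set ε := G x₀ / 2 with hε
  have hε0 : 0 < ε := by positivity
  have hev : ∀ᶠ y in 𝓝 x₀, ε < G y :=
    continuousAt_const.eventually_lt hGc.continuousAt (by linarith)
  obtain ⟨r, hr, hball⟩ := Metric.nhds_basis_closedBall.eventually_iff.mp (hev.and hmax)
  obtain ⟨a, ⟨w₁, w₂, hw, rfl⟩, hlt⟩ := exists_lt_of_lt_csSup
    (s := {a | ∃ w₁ w₂, Cls F₁ F₂ f₁ f₂ L w₁ w₂ ∧ a = w₁ x₀})
    ⟨_, _, _, h.zero, rfl⟩ (show v₁ x₀ - min ε (r ^ 2) < v₁ x₀ by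
      have : 0 < min ε (r ^ 2) := by positivity
      linarith)
  have hwc := hw.lip1.continuous
  have hm1 := min_le_left ε (r ^ 2)
  have hm2 := min_le_right ε (r ^ 2)
  obtain ⟨m, hm, hmx⟩ := (isCompact_closedBall x₀ r).exists_isMaxOn
      ⟨x₀, Metric.mem_closedBall_self hr.le⟩
      (f := fun y => w₁ y - (φ y + (1 * ‖y - x₀‖ ^ 2 + 0))) (by fun_prop)
  have h1 : w₁ x₀ - φ x₀ ≤ w₁ m - (φ m + ‖m - x₀‖ ^ 2) := by
    have := hmx (Metric.mem_closedBall_self hr.le)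
    simpa using this
  obtain ⟨hGm, hvm⟩ := hball hm
  have hwm := h.le_V hw m
  have hwm2 := h.le_V2 hw m
  have hltm : dist m x₀ < r := by
    rcases lt_or_eq_of_le (Metric.mem_closedBall.mp hm) with h' | h'
    · exact h'
    · rw [dist_eq_norm] at h'
      rw [h'] at h1
      have : v₁ m - φ m ≤ v₁ x₀ - φ x₀ := hvm
      linarith
  have hloc : IsLocalMax (fun y => w₁ y - (φ y + (1 * ‖y - x₀‖ ^ 2 + 0))) m := by
    filter_upwards [Metric.isOpen_ball.mem_nhds (Metric.mem_ball.mpr hltm)] with u hu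
    exact hmx (Metric.ball_subset_closedBall hu)
  have hs := hw.sub1 _ (hφ.add (quad_contDiff 1 0 x₀)) m hloc
  rw [(add_grad (c1_grad hφ m) (quad_grad 1 0 x₀ m)).gradient] at hs
  simp only [hG] at hGm
  have := sq_nonneg ‖m - x₀‖
  have e : w₂ m ≤ v₂ m := hwm2
  linarith

lemma Hyp.V_super (h : Hyp F₁ F₂ f₁ f₂ L) :
    StatSuperIneq F₁ 1 (V F₁ F₂ f₁ f₂ L) (V F₂ F₁ f₂ f₁ L) f₁ := by
  intro φ hφ x₀ hmin
  by_contra hcon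
  push Not at hcon
  have hA : ¬ (f₁ x₀ = 0 ∧ f₂ x₀ = 0) := by
    rintro ⟨h1, h2⟩
    rw [h.V_bd x₀ h1 h2, h.swap.V_bd x₀ h2 h1, h1] at hcon
    have := h.m1 x₀ (gradient φ x₀)
    linarith
  have hl1 := h.V_lip
  have hl2 := h.swap.V_lip
  have hc1 := hl1.continuous
  have hc2 := hl2.continuous
  have hs1 := h.V_sub
  have hs2 := h.swap.V_sub
  have hd1 := h.V_dif
  have hd2 := h.swap.V_dif
  have hb1 := h.V_bd
  have hb2 := h.swap.V_bd
  have hmaxi : ∀ w₁ w₂, Cls F₁ F₂ f₁ f₂ L w₁ w₂ → w₁ x₀ ≤ V F₁ F₂ f₁ f₂ L x₀ :=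
    fun _ _ hw => h.le_V hw x₀
  generalize V F₁ F₂ f₁ f₂ L = v₁ at *
  generalize V F₂ F₁ f₂ f₁ L = v₂ at *
  have hgc := grad_cont hφ
  have hφc := hφ.continuous
  have hfc := h.d1
  have hfc2 := h.d2
  set ψ : En n → ℝ := fun y => φ y + ((-1) * ‖y - x₀‖ ^ 2 + (v₁ x₀ - φ x₀)) with hψ
  have hψ1 : ContDiff ℝ 1 ψ := hφ.add (quad_contDiff _ _ _)
  have hψc := hψ1.continuous
  have hψg := grad_cont hψ1
  have hψ0 : ψ x₀ = v₁ x₀ := by simp [hψ]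
  have hψg0 : gradient ψ x₀ = gradient φ x₀ := by
    rw [(add_grad (c1_grad hφ x₀) (quad_grad (-1) (v₁ x₀ - φ x₀) x₀ x₀)).gradient]
    simp
  set G : En n → ℝ := fun x => F₁ x (gradient ψ x) + ψ x - v₂ x - f₁ x with hG
  have hGc : Continuous G := by
    have : Continuous fun x => F₁ x (gradient ψ x) :=
      h.c1.comp (f := fun x => (x, gradient ψ x)) (by fun_prop)
    exact ((this.add hψc).sub hc2).sub hfc
  have hG0 : G x₀ < 0 := by simp only [hG, hψ0, hψg0]; linarith
  set ε := - G x₀ / 2 with hε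
  have hε0 : 0 < ε := by simp only [hε]; linarith
  have hev : ∀ᶠ y in 𝓝 x₀, G y < -ε :=
    hGc.continuousAt.eventually_lt continuousAt_const (by simp only [hε]; linarith)
  have hevA : ∀ᶠ y in 𝓝 x₀, ¬ (f₁ y = 0 ∧ f₂ y = 0) := by
    have hcl : IsClosed {y | f₁ y = 0 ∧ f₂ y = 0} :=
      (isClosed_eq hfc continuous_const).inter (isClosed_eq hfc2 continuous_const)
    exact hcl.isOpen_compl.mem_nhds hA
  obtain ⟨r, hr, hball⟩ := Metric.nhds_basis_ball.eventually_iff.mp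
    ((hev.and hmin).and hevA)
  set δ := min ε (r ^ 2 / 4) with hδ
  have hδ0 : 0 < δ := by positivity
  have hδε : δ ≤ ε := min_le_left _ _
  have hδr : δ ≤ r ^ 2 / 4 := min_le_right _ _
  have hψv : ∀ y ∈ Metric.ball x₀ r, ψ y ≤ v₁ y - ‖y - x₀‖ ^ 2 := by
    intro y hy
    have : v₁ x₀ - φ x₀ ≤ v₁ y - φ y := (hball hy).1.2
    simp only [hψ]; linarith
  classical
  set w : En n → ℝ := fun y => if dist y x₀ < r then max (v₁ y) (ψ y + δ) else v₁ y with hw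
  have hwin : ∀ y, dist y x₀ < r → w y = max (v₁ y) (ψ y + δ) := fun y hy => by
    simp only [hw, if_pos hy]
  have hwout : ∀ y, r / 2 < dist y x₀ → w y = v₁ y := by
    intro y hy
    by_cases hyr : dist y x₀ < r
    · rw [hwin y hyr]
      apply max_eq_left
      have h1 := hψv y hyr
      rw [dist_eq_norm] at hy
      nlinarith
    · simp only [hw, if_neg hyr]
  have hvw : ∀ y, v₁ y ≤ w y := by
    intro y
    by_cases hyr : dist y x₀ < r
    · rw [hwin y hyr]; exact le_max_left _ _
    · simp only [hw, if_neg hyr]; exact le_refl _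
  have hwC : ∀ y, w y ≤ v₁ y + δ := by
    intro y
    by_cases hyr : dist y x₀ < r
    · rw [hwin y hyr]
      have h1 := hψv y hyr
      have := sq_nonneg ‖y - x₀‖
      exact max_le (by linarith) (by linarith)
    · simp only [hw, if_neg hyr]; linarith
  have hcase : ∀ y, w y = v₁ y ∨ (dist y x₀ < r ∧ w y = ψ y + δ) := by
    intro y
    by_cases hyr : dist y x₀ < r
    · rcases max_choice (v₁ y) (ψ y + δ) with h' | h'
      · left; rw [hwin y hyr, h']
      · right; exact ⟨hyr, by rw [hwin y hyr, h']⟩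
    · left; simp only [hw, if_neg hyr]
  have hwcont : Continuous w := by
    rw [continuous_iff_continuousAt]
    intro y
    by_cases hyr : dist y x₀ < r
    · have : ContinuousAt (fun y => max (v₁ y) (ψ y + δ)) y := by fun_prop
      refine this.congr ?_
      filter_upwards [Metric.isOpen_ball.mem_nhds (Metric.mem_ball.mpr hyr)] with u hu
      exact (hwin u hu).symm
    · refine hc1.continuousAt.congr ?_
      have ho : IsOpen {u : En n | r / 2 < dist u x₀} := isOpen_lt (by fun_prop) (by fun_prop)
      filter_upwards [ho.mem_nhds (show r / 2 < dist y x₀ by linarith)] with u hu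
      exact (hwout u hu).symm
  have hsub : StatSubIneq F₁ 1 w v₂ f₁ := by
    intro χ hχ y hmx
    rcases hcase y with h1 | ⟨hyr, h1⟩
    · rw [h1]
      refine hs1 χ hχ y ?_
      filter_upwards [hmx] with u hu
      have := hvw u
      simp only [h1] at hu
      linarith
    · rw [h1]
      have hloc : IsLocalMax (fun x => ψ x - χ x) y := by
        filter_upwards [hmx, Metric.isOpen_ball.mem_nhds (Metric.mem_ball.mpr hyr)] with u hu hur
        have h2 := hwin u hur
        have h3 := le_max_right (v₁ u) (ψ u + δ)
        simp only [h1, h2] at hu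
        linarith
      have h0 := hloc.fderiv_eq_zero
      have hdψ : DifferentiableAt ℝ ψ y := (hψ1.differentiable one_ne_zero) y
      have hdχ : DifferentiableAt ℝ χ y := (hχ.differentiable one_ne_zero) y
      have h4 : fderiv ℝ (fun x => ψ x - χ x) y = fderiv ℝ ψ y - fderiv ℝ χ y :=
        fderiv_sub hdψ hdχ
      rw [h4, sub_eq_zero] at h0
      rw [grad_eq, ← h0, ← grad_eq]
      have h5 : G y < -ε := (hball hyr).1.1
      simp only [hG] at h5
      linarith
  have hdif : ∀ y, w y - v₂ y ≤ f₁ y := by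
    intro y
    rcases hcase y with h1 | ⟨hyr, h1⟩
    · rw [h1]; exact hd1 y
    · rw [h1]
      have h5 : G y < -ε := (hball hyr).1.1
      simp only [hG] at h5
      have := h.m1 y (gradient ψ y)
      linarith
  have hlip : LipschitzWith L w := by
    refine lip_of_test L w v₁ δ hwcont hl1 hwC ?_
    intro χ hχ y hmx
    have h1 := hsub χ hχ y hmx
    refine h.l1 y _ ?_
    have h2 := hd2 y
    have h3 := hvw y
    linarith
  have hcls : Cls F₁ F₂ f₁ f₂ L w v₂ := by
    refine ⟨hlip, hl2, hsub, ?_, hdif, ?_, ?_, ?_⟩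
    · intro χ hχ y hmx
      have := hs2 χ hχ y hmx
      have := hvw y
      linarith
    · intro y
      have := hd2 y
      have := hvw y
      linarith
    · intro y h1 h2
      rcases hcase y with h3 | ⟨hyr, h3⟩
      · rw [h3, hb1 y h1 h2]
      · exact absurd ⟨h1, h2⟩ (hball hyr).2
    · intro y h1 h2
      rw [hb2 y h2 h1]
  have hfin := hmaxi _ _ hcls
  have : w x₀ = max (v₁ x₀) (ψ x₀ + δ) := hwin x₀ (by simpa using hr)
  have h7 := le_max_right (v₁ x₀) (ψ x₀ + δ)
  rw [hψ0] at h7 this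
  linarith

end

end St5

/-- The ergodic constant in Case 1 equals 0 (Proposition 3.1). -/
theorem stmt5 (n : ℕ) (hn : 1 ≤ n)
(F₁ F₂ : En n → En n → ℝ) (f₁ f₂ : En n → ℝ)
    (hF₁cont : Continuous fun q : En n × En n => F₁ q.1 q.2)
    (hF₂cont : Continuous fun q : En n × En n => F₂ q.1 q.2)
    (hF₁per : ZPeriodicH F₁) (hF₂per : ZPeriodicH F₂)
    (hF₁coer : Coercive F₁) (hF₂coer : Coercive F₂)
    (hf₁cont : Continuous f₁) (hf₂cont : Continuous f₂)
    (hf₁per : ZPeriodic f₁) (hf₂per : ZPeriodic f₂)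
    -- (A2)
    (hA2 : ∀ x : En n, 0 ≤ f₁ x ∧ 0 ≤ f₂ x)
    -- (A3)
    (hA3 : ∃ x : En n, f₁ x = 0 ∧ f₂ x = 0)
    -- (A4)
    (hA4 : ∃ lam₀ : ℝ, 0 < lam₀ ∧ lam₀ < 1 ∧
      ∀ lam : ℝ, lam₀ ≤ lam → lam ≤ 1 → ∀ x : En n, ¬(f₁ x = 0 ∧ f₂ x = 0) →
        ∀ p : En n, F₁ x (lam • p) ≤ lam * F₁ x p ∧ F₂ x (lam • p) ≤ lam * F₂ x p)
    -- (A5)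
    (hA5 : (∀ (x p : En n), 0 ≤ F₁ x p ∧ 0 ≤ F₂ x p) ∧ ∀ x : En n, F₁ x 0 = 0 ∧ F₂ x 0 = 0)
    : (∃ v₁ v₂ : En n → ℝ, ZPeriodic v₁ ∧ ZPeriodic v₂ ∧
        CellSolution F₁ F₂ 1 1 v₁ v₂ f₁ f₂) ∧
      (∀ (c : ℝ) (v₁ v₂ : En n → ℝ), ZPeriodic v₁ → ZPeriodic v₂ →
        ErgSolution (fun x p => F₁ x p - f₁ x) (fun x p => F₂ x p - f₂ x) v₁ v₂ c →
        c = 0) := by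
  refine ⟨?_, ?_⟩
  · obtain ⟨M₁, hM₁⟩ := St5.per_bdd hf₁cont hf₁per
    obtain ⟨M₂, hM₂⟩ := St5.per_bdd hf₂cont hf₂per
    obtain ⟨r₁, hr₁⟩ := hF₁coer (M₁ + M₂ + 1)
    obtain ⟨r₂, hr₂⟩ := hF₂coer (M₁ + M₂ + 1)
    have h : St5.Hyp F₁ F₂ f₁ f₂ (Real.toNNReal (max r₁ r₂)) := by
      refine ⟨hF₁cont, hF₂cont, hF₁per, hF₂per, hf₁cont, hf₂cont, hf₁per, hf₂per,
        fun x => (hA2 x).1, fun x => (hA2 x).2, hA3, fun x p => (hA5.1 x p).1,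
        fun x p => (hA5.1 x p).2, fun x => (hA5.2 x).1, fun x => (hA5.2 x).2, ?_, ?_⟩
      · intro x p hp
        by_contra hc
        push Not at hc
        have h1 := Real.le_coe_toNNReal (max r₁ r₂)
        have h2 := hr₁ x p (by have := le_max_left r₁ r₂; linarith)
        have := hM₁ x
        have := hM₂ x
        linarith
      · intro x p hp
        by_contra hc
        push Not at hc
        have h1 := Real.le_coe_toNNReal (max r₁ r₂)
        have h2 := hr₂ x p (by have := le_max_right r₁ r₂; linarith)
        have := hM₁ x
        have := hM₂ x
        linarith
    exact ⟨_, _, h.V_per, h.swap.V_per, h.V_lip.continuous, h.swap.V_lip.continuous,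
      ⟨h.V_sub, h.swap.V_sub⟩, ⟨h.V_super, h.swap.V_super⟩⟩
  · rintro c v₁ v₂ hp₁ hp₂ ⟨hc₁, hc₂, ⟨hs₁, hs₂⟩, ⟨hS₁, hS₂⟩⟩
    apply le_antisymm
    · obtain ⟨m₁, hm₁⟩ := St5.per_min hc₁ hp₁
      obtain ⟨m₂, hm₂⟩ := St5.per_min hc₂ hp₂
      have hg : ∀ x : En n, gradient (fun _ : En n => (0 : ℝ)) x = 0 := by
        intro x
        rw [St5.grad_eq]
        simp
      rcases le_total (v₁ m₁) (v₂ m₂) with hle | hle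
      · have h1 := hS₁ (fun _ => 0) contDiff_const m₁
          (Filter.Eventually.of_forall fun u => by simpa using hm₁ u)
        simp only [hg, (hA5.2 m₁).1] at h1
        have := (hA2 m₁).1
        have := hm₂ m₁
        linarith
      · have h1 := hS₂ (fun _ => 0) contDiff_const m₂
          (Filter.Eventually.of_forall fun u => by simpa using hm₂ u)
        simp only [hg, (hA5.2 m₂).2] at h1
        have := (hA2 m₂).2
        have := hm₁ m₂
        linarith
    · obtain ⟨z, hz₁, hz₂⟩ := hA3
      have h1 := St5.sub_pointwise F₁ v₁ v₂ (fun x => f₁ x + c) (fun x p => (hA5.1 x p).1)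
        hc₁ hc₂ (by fun_prop) (fun φ hφ x hx => by
          have := hs₁ φ hφ x hx
          simp only at this ⊢
          linarith) z
      have h2 := St5.sub_pointwise F₂ v₂ v₁ (fun x => f₂ x + c) (fun x p => (hA5.1 x p).2)
        hc₂ hc₁ (by fun_prop) (fun φ hφ x hx => by
          have := hs₂ φ hφ x hx
          simp only at this ⊢
          linarith) z
      simp only [hz₁, hz₂] at h1 h2
      linarith
end
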